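/- Assume: 0.9·d_{i0} ≤ d_i ≤ 1.1·d_{i0}, 0.9·d_0 ≤ d ≤ 1.1·d_0, ρ ≥ d² + 2‖e‖², 0 < ε ≤ 1/15; the Local RIP holds; ‖𝒜*(e)‖ ≤ εd_0/(10√2·sκ); the Local Regularity Condition holds with ω = d_0/7000 and c = ‖e‖² + 2000s‖𝒜*(e)‖², i.e. ‖∇F̃(z)‖² ≥ ω·max(F̃(z) − c, 0) for all z ∈ 𝒩_d ∩ 𝒩_μ ∩ 𝒩_ε; and there is C_L > 0 with ηω ≤ 1 and 0 < η ≤ 1/C_L such that ‖∇F̃(z + tΔz) − ∇F̃(z)‖ ≤ C_L·t·‖Δz‖ for t ∈ [0,1] whenever the segment {z + τΔz : τ ∈ [0,1]} lies in 𝒩_ε ∩ 𝒩_F̃. Let z^{(0)} = (u^{(0)},v^{(0)}) satisfy ‖u_i^{(0)}‖ ≤ (2/√3)√d_{i0}, ‖v_i^{(0)}‖ ≤ (2/√3)√d_{i0}, √L‖Bu_i^{(0)}‖_∞ ≤ (4/√3)√d_{i0}μ, and δ_i(u_i^{(0)},v_i^{(0)}) ≤ 2ε/(5√s·κ) for all i,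 and define z^{(t+1)} = z^{(t)} − η∇F̃(z^{(t)}). Then for every t ≥ 0: ‖ℋ(z^{(t)}) − X_0‖_F ≤ (εd_0/√(2sκ²))·(1 − ηω)^{t/2} + 60√s·‖𝒜*(e)‖. -/

import Mathlib

noncomputable section
open Finset ComplexConjugate

namespace RGD

/-- Squared Euclidean norm of a complex vector. -/
def vnormSq {n : ℕ} (v : Fin n → ℂ) : ℝ := ∑ j, ‖v j‖ ^ 2

/-- Euclidean norm of a complex vector. -/
def vnorm {n : ℕ} (v : Fin n → ℂ) : ℝ := Real.sqrt (vnormSq v)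

/-- Inner product, conjugate-linear in the first argument. -/
def vinner {n : ℕ} (u v : Fin n → ℂ) : ℂ := ∑ j, conj (u j) * v j

/-- Squared Frobenius norm of a matrix. -/
def frobSq {K N : ℕ} (Z : Matrix (Fin K) (Fin N) ℂ) : ℝ := ∑ k, ∑ j, ‖Z k j‖ ^ 2

/-- Frobenius norm of a matrix. -/
def frob {K N : ℕ} (Z : Matrix (Fin K) (Fin N) ℂ) : ℝ := Real.sqrt (frobSq Z)

/-- Frobenius inner product `⟨U,V⟩ = Tr(U*V)`, conjugate-linear in the first argument. -/
def finner {K N : ℕ} (U V : Matrix (Fin K) (Fin N) ℂ) : ℂ := ∑ k, ∑ j, conj (U k j) * V k j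

/-- Spectral (operator) norm of a matrix: sup of `‖Zv‖` over the closed unit ball. -/
def opNorm {K N : ℕ} (Z : Matrix (Fin K) (Fin N) ℂ) : ℝ :=
  sSup {r : ℝ | ∃ v : Fin N → ℂ, vnorm v ≤ 1 ∧ r = vnorm (Z.mulVec v)}

/-- Squared Frobenius norm of a block-diagonal matrix, given by its diagonal blocks. -/
def famFrobSq {K N s : ℕ} (Z : Fin s → Matrix (Fin K) (Fin N) ℂ) : ℝ := ∑ i, frobSq (Z i)

/-- Frobenius norm of a block-diagonal matrix, given by its diagonal blocks. -/
def famFrob {K N s : ℕ} (Z : Fin s → Matrix (Fin K) (Fin N) ℂ) : ℝ := Real.sqrt (famFrobSq Z)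

/-- The rank-one matrix `u v*`. -/
def rankOne {K N : ℕ} (u : Fin K → ℂ) (v : Fin N → ℂ) : Matrix (Fin K) (Fin N) ℂ :=
  Matrix.of fun k j => u k * conj (v j)

/-- `ℋ(h,x)`: block-diagonal matrix with `i`-th block `hᵢ xᵢ*`. -/
def Hmap {K N s : ℕ} (h : Fin s → Fin K → ℂ) (x : Fin s → Fin N → ℂ) :
    Fin s → Matrix (Fin K) (Fin N) ℂ := fun i => rankOne (h i) (x i)

/-- `𝒜ᵢ(Z) = (bₗ* Z aₗ)ₗ`. -/
def calAi {K N L : ℕ} (b : Fin L → Fin K → ℂ) (a : Fin L → Fin N → ℂ)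
    (Z : Matrix (Fin K) (Fin N) ℂ) : Fin L → ℂ :=
  fun l => vinner (b l) (Z.mulVec (a l))

/-- `𝒜(Z) = Σᵢ 𝒜ᵢ(Zᵢ)` on block-diagonal matrices. -/
def calA {K N L s : ℕ} (b : Fin L → Fin K → ℂ) (a : Fin s → Fin L → Fin N → ℂ)
    (Z : Fin s → Matrix (Fin K) (Fin N) ℂ) : Fin L → ℂ :=
  fun l => ∑ i, calAi b (a i) (Z i) l

/-- `𝒜ᵢ*(z) = Σₗ zₗ bₗ aₗ*`. -/
def calAdj {K N L : ℕ} (b : Fin L → Fin K → ℂ) (a : Fin L → Fin N → ℂ)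
    (z : Fin L → ℂ) : Matrix (Fin K) (Fin N) ℂ :=
  Matrix.of fun k j => ∑ l, z l * b l k * conj (a l j)

/-- `‖𝒜*(e)‖ = maxᵢ ‖𝒜ᵢ*(e)‖` (operator norms). -/
def AadjNorm {K N L s : ℕ} (b : Fin L → Fin K → ℂ) (a : Fin s → Fin L → Fin N → ℂ)
    (e : Fin L → ℂ) : ℝ :=
  ⨆ i : Fin s, opNorm (calAdj b (a i) e)

/-- `B*B = I_K`, expressed in terms of the columns `bₗ` of `B*`. -/
def BtBeqI {K L : ℕ} (b : Fin L → Fin K → ℂ) : Prop :=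
  ∀ k k' : Fin K, (∑ l, b l k * conj (b l k')) = if k = k' then (1 : ℂ) else 0

/-- `μ ≥ μ_h`, i.e. `√L ‖B h_{i0}‖_∞ ≤ μ ‖h_{i0}‖` for all `i`. -/
def muhLe {K L s : ℕ} (b : Fin L → Fin K → ℂ) (h0 : Fin s → Fin K → ℂ) (μ : ℝ) : Prop :=
  ∀ i l, Real.sqrt L * ‖vinner (b l) (h0 i)‖ ≤ μ * vnorm (h0 i)

/-- `d₀ = √(Σᵢ d_{i0}²)`. -/
def dtot {s : ℕ} (d0 : Fin s → ℝ) : ℝ := Real.sqrt (∑ i, d0 i ^ 2)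

/-- Condition number `κ = (maxᵢ d_{i0}) / (minᵢ d_{i0})`. -/
def kappa {s : ℕ} (d0 : Fin s → ℝ) : ℝ := (⨆ i, d0 i) / (⨅ i, d0 i)

/-- The observation `y = 𝒜(ℋ(h₀,x₀)) + e`. -/
def yvec {K N L s : ℕ} (b : Fin L → Fin K → ℂ) (a : Fin s → Fin L → Fin N → ℂ)
    (h0 : Fin s → Fin K → ℂ) (x0 : Fin s → Fin N → ℂ) (e : Fin L → ℂ) : Fin L → ℂ :=
  fun l => calA b a (Hmap h0 x0) l + e l

/-- `F(h,x) = ‖𝒜(ℋ(h,x)) − y‖²`. -/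
def Fobj {K N L s : ℕ} (b : Fin L → Fin K → ℂ) (a : Fin s → Fin L → Fin N → ℂ)
    (h0 : Fin s → Fin K → ℂ) (x0 : Fin s → Fin N → ℂ) (e : Fin L → ℂ)
    (h : Fin s → Fin K → ℂ) (x : Fin s → Fin N → ℂ) : ℝ :=
  vnormSq (fun l => calA b a (Hmap h x) l - yvec b a h0 x0 e l)

def G0 (z : ℝ) : ℝ := max (z - 1) 0 ^ 2

def G0' (z : ℝ) : ℝ := 2 * max (z - 1) 0

/-- The `i`-th regularizer `Gᵢ(hᵢ,xᵢ)` (including the factor `ρ`). -/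
def Gi {K N L : ℕ} (b : Fin L → Fin K → ℂ) (ρ μ di : ℝ)
    (hi : Fin K → ℂ) (xi : Fin N → ℂ) : ℝ :=
  ρ * (G0 (vnormSq hi / (2 * di)) + G0 (vnormSq xi / (2 * di))
    + ∑ l, G0 ((L : ℝ) * ‖vinner (b l) hi‖ ^ 2 / (8 * di * μ ^ 2)))

/-- The regularizer `G(h,x) = Σᵢ Gᵢ(hᵢ,xᵢ)`. -/
def Greg {K N L s : ℕ} (b : Fin L → Fin K → ℂ) (ρ μ : ℝ) (dd : Fin s → ℝ)
    (h : Fin s → Fin K → ℂ) (x : Fin s → Fin N → ℂ) : ℝ :=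
  ∑ i, Gi b ρ μ (dd i) (h i) (x i)

/-- `F̃ = F + G`. -/
def Ftil {K N L s : ℕ} (b : Fin L → Fin K → ℂ) (a : Fin s → Fin L → Fin N → ℂ)
    (h0 : Fin s → Fin K → ℂ) (x0 : Fin s → Fin N → ℂ) (e : Fin L → ℂ)
    (ρ μ : ℝ) (dd : Fin s → ℝ)
    (h : Fin s → Fin K → ℂ) (x : Fin s → Fin N → ℂ) : ℝ :=
  Fobj b a h0 x0 e h x + Greg b ρ μ dd h x

/-- The residual `𝒜(ℋ(h,x)) − y`. -/
def residual {K N L s : ℕ} (b : Fin L → Fin K → ℂ) (a : Fin s → Fin L → Fin N → ℂ)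
    (h0 : Fin s → Fin K → ℂ) (x0 : Fin s → Fin N → ℂ) (e : Fin L → ℂ)
    (h : Fin s → Fin K → ℂ) (x : Fin s → Fin N → ℂ) : Fin L → ℂ :=
  fun l => calA b a (Hmap h x) l - yvec b a h0 x0 e l

/-- Wirtinger gradient `∇F_{hᵢ} = 𝒜ᵢ*(𝒜(ℋ(h,x)) − y) xᵢ`. -/
def gradFh {K N L s : ℕ} (b : Fin L → Fin K → ℂ) (a : Fin s → Fin L → Fin N → ℂ)
    (h0 : Fin s → Fin K → ℂ) (x0 : Fin s → Fin N → ℂ) (e : Fin L → ℂ)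
    (h : Fin s → Fin K → ℂ) (x : Fin s → Fin N → ℂ) (i : Fin s) : Fin K → ℂ :=
  (calAdj b (a i) (residual b a h0 x0 e h x)).mulVec (x i)

/-- Wirtinger gradient `∇F_{xᵢ} = (𝒜ᵢ*(𝒜(ℋ(h,x)) − y))* hᵢ`. -/
def gradFx {K N L s : ℕ} (b : Fin L → Fin K → ℂ) (a : Fin s → Fin L → Fin N → ℂ)
    (h0 : Fin s → Fin K → ℂ) (x0 : Fin s → Fin N → ℂ) (e : Fin L → ℂ)
    (h : Fin s → Fin K → ℂ) (x : Fin s → Fin N → ℂ) (i : Fin s) : Fin N → ℂ :=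
  (calAdj b (a i) (residual b a h0 x0 e h x)).conjTranspose.mulVec (h i)

/-- Wirtinger gradient `∇G_{hᵢ}`. -/
def gradGh {K L s : ℕ} (b : Fin L → Fin K → ℂ) (ρ μ : ℝ) (dd : Fin s → ℝ)
    (h : Fin s → Fin K → ℂ) (i : Fin s) : Fin K → ℂ :=
  fun k => ((ρ / (2 * dd i) : ℝ) : ℂ) *
    (((G0' (vnormSq (h i) / (2 * dd i)) : ℝ) : ℂ) * h i k
      + (((L : ℝ) / (4 * μ ^ 2) : ℝ) : ℂ) *
        ∑ l, ((G0' ((L : ℝ) * ‖vinner (b l) (h i)‖ ^ 2 / (8 * dd i * μ ^ 2)) : ℝ) : ℂ)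
          * (vinner (b l) (h i) * b l k))

/-- Wirtinger gradient `∇G_{xᵢ}`. -/
def gradGx {N s : ℕ} (ρ : ℝ) (dd : Fin s → ℝ)
    (x : Fin s → Fin N → ℂ) (i : Fin s) : Fin N → ℂ :=
  fun j => ((ρ / (2 * dd i) : ℝ) : ℂ) * (((G0' (vnormSq (x i) / (2 * dd i)) : ℝ) : ℂ) * x i j)

/-- `∇F̃_{hᵢ} = ∇F_{hᵢ} + ∇G_{hᵢ}`. -/
def gradH {K N L s : ℕ} (b : Fin L → Fin K → ℂ) (a : Fin s → Fin L → Fin N → ℂ)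
    (h0 : Fin s → Fin K → ℂ) (x0 : Fin s → Fin N → ℂ) (e : Fin L → ℂ)
    (ρ μ : ℝ) (dd : Fin s → ℝ)
    (h : Fin s → Fin K → ℂ) (x : Fin s → Fin N → ℂ) (i : Fin s) : Fin K → ℂ :=
  fun k => gradFh b a h0 x0 e h x i k + gradGh b ρ μ dd h i k

/-- `∇F̃_{xᵢ} = ∇F_{xᵢ} + ∇G_{xᵢ}`. -/
def gradX {K N L s : ℕ} (b : Fin L → Fin K → ℂ) (a : Fin s → Fin L → Fin N → ℂ)
    (h0 : Fin s → Fin K → ℂ) (x0 : Fin s → Fin N → ℂ) (e : Fin L → ℂ)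
    (ρ μ : ℝ) (dd : Fin s → ℝ)
    (h : Fin s → Fin K → ℂ) (x : Fin s → Fin N → ℂ) (i : Fin s) : Fin N → ℂ :=
  fun j => gradFx b a h0 x0 e h x i j + gradGx ρ dd x i j

/-- `‖∇F̃(h,x)‖²` (squared norm of the stacked Wirtinger gradient). -/
def gradNormSq {K N L s : ℕ} (b : Fin L → Fin K → ℂ) (a : Fin s → Fin L → Fin N → ℂ)
    (h0 : Fin s → Fin K → ℂ) (x0 : Fin s → Fin N → ℂ) (e : Fin L → ℂ)
    (ρ μ : ℝ) (dd : Fin s → ℝ)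
    (h : Fin s → Fin K → ℂ) (x : Fin s → Fin N → ℂ) : ℝ :=
  ∑ i, vnormSq (gradH b a h0 x0 e ρ μ dd h x i) + ∑ i, vnormSq (gradX b a h0 x0 e ρ μ dd h x i)

/-- `‖∇F̃(h',x') − ∇F̃(h,x)‖²`. -/
def gradDiffNormSq {K N L s : ℕ} (b : Fin L → Fin K → ℂ) (a : Fin s → Fin L → Fin N → ℂ)
    (h0 : Fin s → Fin K → ℂ) (x0 : Fin s → Fin N → ℂ) (e : Fin L → ℂ)
    (ρ μ : ℝ) (dd : Fin s → ℝ)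
    (h : Fin s → Fin K → ℂ) (x : Fin s → Fin N → ℂ)
    (h' : Fin s → Fin K → ℂ) (x' : Fin s → Fin N → ℂ) : ℝ :=
  ∑ i, vnormSq (fun k => gradH b a h0 x0 e ρ μ dd h' x' i k - gradH b a h0 x0 e ρ μ dd h x i k)
  + ∑ i, vnormSq (fun j => gradX b a h0 x0 e ρ μ dd h' x' i j - gradX b a h0 x0 e ρ μ dd h x i j)

/-- Membership in `𝒩_d`. -/
def inNd {K N s : ℕ} (d0 : Fin s → ℝ)
    (h : Fin s → Fin K → ℂ) (x : Fin s → Fin N → ℂ) : Prop :=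
  ∀ i, vnorm (h i) ≤ 2 * Real.sqrt (d0 i) ∧ vnorm (x i) ≤ 2 * Real.sqrt (d0 i)

/-- Membership in `𝒩_μ`. -/
def inNmu {K L s : ℕ} (b : Fin L → Fin K → ℂ) (d0 : Fin s → ℝ) (μ : ℝ)
    (h : Fin s → Fin K → ℂ) : Prop :=
  ∀ i, ∀ l, Real.sqrt L * ‖vinner (b l) (h i)‖ ≤ 4 * Real.sqrt (d0 i) * μ

/-- `δᵢ(hᵢ,xᵢ) = ‖hᵢxᵢ* − h_{i0}x_{i0}*‖_F / d_{i0}`. -/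
def deltaI {K N : ℕ} (h0i : Fin K → ℂ) (x0i : Fin N → ℂ) (d0i : ℝ)
    (hi : Fin K → ℂ) (xi : Fin N → ℂ) : ℝ :=
  frob (rankOne hi xi - rankOne h0i x0i) / d0i

/-- Membership in `𝒩_ε`. -/
def inNeps {K N s : ℕ} (h0 : Fin s → Fin K → ℂ) (x0 : Fin s → Fin N → ℂ)
    (d0 : Fin s → ℝ) (ε : ℝ)
    (h : Fin s → Fin K → ℂ) (x : Fin s → Fin N → ℂ) : Prop :=
  ∀ i, deltaI (h0 i) (x0 i) (d0 i) (h i) (x i) ≤ ε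

/-- The global relative error `δ(h,x) = ‖ℋ(h,x) − X₀‖_F / d₀`. -/
def deltaTot {K N s : ℕ} (h0 : Fin s → Fin K → ℂ) (x0 : Fin s → Fin N → ℂ)
    (d0 : Fin s → ℝ)
    (h : Fin s → Fin K → ℂ) (x : Fin s → Fin N → ℂ) : ℝ :=
  famFrob (fun i => Hmap h x i - Hmap h0 x0 i) / dtot d0

/-- Membership in `𝒩_F̃`. -/
def inNF {K N L s : ℕ} (b : Fin L → Fin K → ℂ) (a : Fin s → Fin L → Fin N → ℂ)
    (h0 : Fin s → Fin K → ℂ) (x0 : Fin s → Fin N → ℂ) (e : Fin L → ℂ)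
    (d0 : Fin s → ℝ) (ρ μ : ℝ) (dd : Fin s → ℝ) (ε : ℝ)
    (h : Fin s → Fin K → ℂ) (x : Fin s → Fin N → ℂ) : Prop :=
  Ftil b a h0 x0 e ρ μ dd h x ≤ ε ^ 2 * dtot d0 ^ 2 / (3 * (s : ℝ) * kappa d0 ^ 2) + vnormSq e

/-- The Local Restricted Isometry Property on `𝒩_d ∩ 𝒩_μ ∩ 𝒩_ε`. -/
def LocalRIP {K N L s : ℕ} (b : Fin L → Fin K → ℂ) (a : Fin s → Fin L → Fin N → ℂ)
    (h0 : Fin s → Fin K → ℂ) (x0 : Fin s → Fin N → ℂ)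
    (d0 : Fin s → ℝ) (μ ε : ℝ) : Prop :=
  ∀ (h : Fin s → Fin K → ℂ) (x : Fin s → Fin N → ℂ),
    inNd d0 h x → inNmu b d0 μ h → inNeps h0 x0 d0 ε h x →
      (2 / 3) * famFrobSq (fun i => Hmap h x i - Hmap h0 x0 i)
          ≤ vnormSq (calA b a fun i => Hmap h x i - Hmap h0 x0 i)
      ∧ vnormSq (calA b a fun i => Hmap h x i - Hmap h0 x0 i)
          ≤ (3 / 2) * famFrobSq (fun i => Hmap h x i - Hmap h0 x0 i)

/-- `α_{i1} = ⟨h_{i0}, hᵢ⟩ / d_{i0}`. -/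
def alpha1 {K s : ℕ} (h0 : Fin s → Fin K → ℂ) (d0 : Fin s → ℝ)
    (h : Fin s → Fin K → ℂ) (i : Fin s) : ℂ :=
  vinner (h0 i) (h i) / ((d0 i : ℝ) : ℂ)

/-- `α_{i2} = ⟨x_{i0}, xᵢ⟩ / d_{i0}`. -/
def alpha2 {N s : ℕ} (x0 : Fin s → Fin N → ℂ) (d0 : Fin s → ℝ)
    (x : Fin s → Fin N → ℂ) (i : Fin s) : ℂ :=
  vinner (x0 i) (x i) / ((d0 i : ℝ) : ℂ)

/-- `δ₀ = δ/10`. -/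
def delta0 {K N s : ℕ} (h0 : Fin s → Fin K → ℂ) (x0 : Fin s → Fin N → ℂ)
    (d0 : Fin s → ℝ) (h : Fin s → Fin K → ℂ) (x : Fin s → Fin N → ℂ) : ℝ :=
  deltaTot h0 x0 d0 h x / 10

/-- `αᵢ = (1−δ₀)α_{i1}` if `‖hᵢ‖ ≥ ‖xᵢ‖`, else `1/((1−δ₀) conj(α_{i2}))`. -/
def alphaC {K N s : ℕ} (h0 : Fin s → Fin K → ℂ) (x0 : Fin s → Fin N → ℂ)
    (d0 : Fin s → ℝ) (h : Fin s → Fin K → ℂ) (x : Fin s → Fin N → ℂ) (i : Fin s) : ℂ :=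
  if vnorm (x i) ≤ vnorm (h i)
  then ((1 - delta0 h0 x0 d0 h x : ℝ) : ℂ) * alpha1 h0 d0 h i
  else 1 / (((1 - delta0 h0 x0 d0 h x : ℝ) : ℂ) * conj (alpha2 x0 d0 x i))

/-- `Δhᵢ = hᵢ − αᵢ h_{i0}`. -/
def dh {K N s : ℕ} (h0 : Fin s → Fin K → ℂ) (x0 : Fin s → Fin N → ℂ)
    (d0 : Fin s → ℝ) (h : Fin s → Fin K → ℂ) (x : Fin s → Fin N → ℂ) (i : Fin s) :
    Fin K → ℂ :=
  fun k => h i k - alphaC h0 x0 d0 h x i * h0 i k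

/-- `Δxᵢ = xᵢ − conj(αᵢ)⁻¹ x_{i0}`. -/
def dx {K N s : ℕ} (h0 : Fin s → Fin K → ℂ) (x0 : Fin s → Fin N → ℂ)
    (d0 : Fin s → ℝ) (h : Fin s → Fin K → ℂ) (x : Fin s → Fin N → ℂ) (i : Fin s) :
    Fin N → ℂ :=
  fun j => x i j - (conj (alphaC h0 x0 d0 h x i))⁻¹ * x0 i j

/-- `σ²_max(h,x) = maxₗ Σᵢ |bₗ*hᵢ|² ‖xᵢ‖²`. -/
def sigmaMaxSq {K N L s : ℕ} (b : Fin L → Fin K → ℂ)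
    (h : Fin s → Fin K → ℂ) (x : Fin s → Fin N → ℂ) : ℝ :=
  ⨆ l : Fin L, ∑ i, ‖vinner (b l) (h i)‖ ^ 2 * vnormSq (x i)

/-- The rank-one bound (Lemma: `𝒜` on block-diagonal matrices with rank-1 blocks). -/
def RankOneBound {K N L s : ℕ} (b : Fin L → Fin K → ℂ)
    (a : Fin s → Fin L → Fin N → ℂ) : Prop :=
  ∀ (h : Fin s → Fin K → ℂ) (x : Fin s → Fin N → ℂ),
    vnormSq (calA b a (Hmap h x)) ≤
      4 / 3 * famFrobSq (Hmap h x)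
      + 2 * Real.sqrt (2 * (s : ℝ) * famFrobSq (Hmap h x) * sigmaMaxSq b h x
          * ((K : ℝ) + N) * Real.log L)
      + 8 * (s : ℝ) * sigmaMaxSq b h x * ((K : ℝ) + N) * Real.log L

/-- The subspace `Tᵢ = {h_{i0} v* + u x_{i0}*}`. -/
def Tspace {K N : ℕ} (h0i : Fin K → ℂ) (x0i : Fin N → ℂ) :
    Set (Matrix (Fin K) (Fin N) ℂ) :=
  {Z | ∃ (u : Fin K → ℂ) (v : Fin N → ℂ), Z = rankOne h0i v + rankOne u x0i}

/-- `P` is the orthogonal projection onto `Tᵢ` w.r.t. the Frobenius inner product. -/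
def IsFrobProj {K N : ℕ} (h0i : Fin K → ℂ) (x0i : Fin N → ℂ)
    (P : Matrix (Fin K) (Fin N) ℂ → Matrix (Fin K) (Fin N) ℂ) : Prop :=
  ∀ Z, P Z ∈ Tspace h0i x0i ∧ ∀ W ∈ Tspace h0i x0i, finner W (Z - P Z) = 0

/-- Operator norm of `𝒜ᵢ` from `(ℂ^{K×N}, ‖·‖_F)` to `(ℂ^L, ‖·‖)`. -/
def calAiOpNorm {K N L : ℕ} (b : Fin L → Fin K → ℂ) (a : Fin L → Fin N → ℂ) : ℝ :=
  sSup {r : ℝ | ∃ Z : Matrix (Fin K) (Fin N) ℂ, frob Z ≤ 1 ∧ r = vnorm (calAi b a Z)}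

/-- Operator norm of `𝒜` from block-diagonal matrices with `‖·‖_F` to `ℂ^L`. -/
def calAOpNorm {K N L s : ℕ} (b : Fin L → Fin K → ℂ)
    (a : Fin s → Fin L → Fin N → ℂ) : ℝ :=
  sSup {r : ℝ | ∃ Z : Fin s → Matrix (Fin K) (Fin N) ℂ, famFrob Z ≤ 1 ∧ r = vnorm (calA b a Z)}

/-- Norm of a stacked vector in `ℂ^{ns}`. -/
def stackNorm {n s : ℕ} (u : Fin s → Fin n → ℂ) : ℝ := Real.sqrt (∑ i, vnormSq (u i))

/-- Norm of a point `z = (h,x) ∈ ℂ^{s(K+N)}`. -/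
def pairNorm {K N s : ℕ} (u : Fin s → Fin K → ℂ) (v : Fin s → Fin N → ℂ) : ℝ :=
  Real.sqrt (∑ i, vnormSq (u i) + ∑ i, vnormSq (v i))

/-- `z + t • w` componentwise, `t` real. -/
def shiftV {n s : ℕ} (u w : Fin s → Fin n → ℂ) (t : ℝ) : Fin s → Fin n → ℂ :=
  fun i k => u i k + (t : ℂ) * w i k

/-- `σ_max(h) = maxₗ √(Σᵢ |bₗ*hᵢ|²)` (unit `xᵢ`'s). -/
def sigmaMaxU {K L s : ℕ} (b : Fin L → Fin K → ℂ) (h : Fin s → Fin K → ℂ) : ℝ :=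
  ⨆ l, Real.sqrt (∑ i, ‖vinner (b l) (h i)‖ ^ 2)

/-! ### Euclidean and Frobenius preliminaries -/

lemma vnormSq_nonneg {n : ℕ} (v : Fin n → ℂ) : 0 ≤ vnormSq v :=
  Finset.sum_nonneg fun _ _ => sq_nonneg _

lemma vnorm_nonneg {n : ℕ} (v : Fin n → ℂ) : 0 ≤ vnorm v := Real.sqrt_nonneg _

lemma vnorm_sq {n : ℕ} (v : Fin n → ℂ) : vnorm v ^ 2 = vnormSq v :=
  Real.sq_sqrt (vnormSq_nonneg v)

lemma frobSq_nonneg {K N : ℕ} (Z : Matrix (Fin K) (Fin N) ℂ) : 0 ≤ frobSq Z :=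
  Finset.sum_nonneg fun _ _ => Finset.sum_nonneg fun _ _ => sq_nonneg _

lemma frob_sq {K N : ℕ} (Z : Matrix (Fin K) (Fin N) ℂ) : frob Z ^ 2 = frobSq Z :=
  Real.sq_sqrt (frobSq_nonneg Z)

lemma famFrobSq_nonneg {K N s : ℕ} (Z : Fin s → Matrix (Fin K) (Fin N) ℂ) : 0 ≤ famFrobSq Z :=
  Finset.sum_nonneg fun _ _ => frobSq_nonneg _

lemma famFrob_sq {K N s : ℕ} (Z : Fin s → Matrix (Fin K) (Fin N) ℂ) :
    famFrob Z ^ 2 = famFrobSq Z :=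
  Real.sq_sqrt (famFrobSq_nonneg Z)

lemma vnorm_eq_norm {n : ℕ} (v : Fin n → ℂ) : vnorm v = ‖WithLp.toLp 2 v‖ := by
  rw [EuclideanSpace.norm_eq]; rfl

lemma vinner_eq_inner {n : ℕ} (u v : Fin n → ℂ) :
    vinner u v = inner ℂ (WithLp.toLp 2 u) (WithLp.toLp 2 v) := by
  simp [vinner, PiLp.inner_apply, mul_comm]

lemma norm_vinner_le {n : ℕ} (u v : Fin n → ℂ) : ‖vinner u v‖ ≤ vnorm u * vnorm v := by
  rw [vinner_eq_inner, vnorm_eq_norm, vnorm_eq_norm]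
  exact norm_inner_le_norm _ _

lemma vinner_self {n : ℕ} (v : Fin n → ℂ) : vinner v v = (vnormSq v : ℂ) := by
  simp [vinner, vnormSq, Complex.conj_mul']

lemma conj_vinner {n : ℕ} (u v : Fin n → ℂ) : conj (vinner u v) = vinner v u := by
  simp [vinner, mul_comm]

lemma vinner_add_right {n : ℕ} (u v w : Fin n → ℂ) :
    vinner u (fun k => v k + w k) = vinner u v + vinner u w := by
  simp [vinner, mul_add, Finset.sum_add_distrib]

lemma vinner_add_left {n : ℕ} (u v w : Fin n → ℂ) :
    vinner (fun k => v k + w k) u = vinner v u + vinner w u := by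
  simp [vinner, add_mul, Finset.sum_add_distrib]

lemma vinner_sub_right {n : ℕ} (u v w : Fin n → ℂ) :
    vinner u (fun k => v k - w k) = vinner u v - vinner u w := by
  simp [vinner, mul_sub, Finset.sum_sub_distrib]

lemma vinner_mul_right {n : ℕ} (u v : Fin n → ℂ) (c : ℂ) :
    vinner u (fun k => c * v k) = c * vinner u v := by
  simp only [vinner, Finset.mul_sum]
  exact Finset.sum_congr rfl fun _ _ => by ring

lemma vinner_mul_left {n : ℕ} (u v : Fin n → ℂ) (c : ℂ) :
    vinner (fun k => c * v k) u = conj c * vinner v u := by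
  simp only [vinner, Finset.mul_sum, map_mul]
  exact Finset.sum_congr rfl fun _ _ => by ring

lemma vinner_sum_right {n m : ℕ} (u : Fin n → ℂ) (v : Fin m → Fin n → ℂ) :
    vinner u (fun k => ∑ l, v l k) = ∑ l, vinner u (v l) := by
  simp only [vinner, Finset.mul_sum]
  exact Finset.sum_comm

lemma vnormSq_mul {n : ℕ} (v : Fin n → ℂ) (c : ℂ) :
    vnormSq (fun k => c * v k) = ‖c‖ ^ 2 * vnormSq v := by
  simp [vnormSq, mul_pow, Finset.mul_sum]

lemma vnorm_mul {n : ℕ} (v : Fin n → ℂ) (c : ℂ) :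
    vnorm (fun k => c * v k) = ‖c‖ * vnorm v := by
  rw [vnorm, vnormSq_mul, Real.sqrt_mul (sq_nonneg _), Real.sqrt_sq (norm_nonneg _), vnorm]

lemma vnormSq_sub {n : ℕ} (v w : Fin n → ℂ) :
    vnormSq (fun k => v k - w k) = vnormSq v - 2 * (vinner v w).re + vnormSq w := by
  simp only [vnormSq, vinner, Complex.re_sum, Finset.mul_sum, ← Finset.sum_sub_distrib,
    ← Finset.sum_add_distrib]
  refine Finset.sum_congr rfl fun k _ => ?_
  simp only [← Complex.normSq_eq_norm_sq, Complex.normSq_apply, Complex.sub_re, Complex.sub_im,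
    Complex.mul_re, Complex.conj_re, Complex.conj_im]
  ring

lemma finner_rankOne {K N : ℕ} (u : Fin K → ℂ) (v : Fin N → ℂ) (M : Matrix (Fin K) (Fin N) ℂ) :
    finner (rankOne u v) M = vinner u (M.mulVec v) := by
  simp only [finner, rankOne, vinner, Matrix.mulVec, dotProduct, Matrix.of_apply, Finset.mul_sum,
    map_mul, Complex.conj_conj]
  exact Finset.sum_congr rfl fun _ _ => Finset.sum_congr rfl fun _ _ => by ring

lemma finner_add_left {K N : ℕ} (U V M : Matrix (Fin K) (Fin N) ℂ) :
    finner (U + V) M = finner U M + finner V M := by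
  simp [finner, add_mul, Finset.sum_add_distrib]

lemma finner_add_right {K N : ℕ} (U V M : Matrix (Fin K) (Fin N) ℂ) :
    finner M (U + V) = finner M U + finner M V := by
  simp [finner, mul_add, Finset.sum_add_distrib]

lemma finner_self {K N : ℕ} (U : Matrix (Fin K) (Fin N) ℂ) : finner U U = (frobSq U : ℂ) := by
  simp [finner, frobSq, Complex.conj_mul']

lemma rankOne_mulVec {K N : ℕ} (u : Fin K → ℂ) (v w : Fin N → ℂ) :
    (rankOne u v).mulVec w = fun k => vinner v w * u k := by
  funext k
  simp only [rankOne, vinner, Matrix.mulVec, dotProduct, Matrix.of_apply, Finset.sum_mul]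
  exact Finset.sum_congr rfl fun _ _ => by ring

lemma frobSq_rankOne_add_rankOne {K N : ℕ} {u u' : Fin K → ℂ} (v v' : Fin N → ℂ)
    (huu : vinner u u' = 0) :
    frobSq (rankOne u v + rankOne u' v') = vnormSq u * vnormSq v + vnormSq u' * vnormSq v' := by
  have huu' : vinner u' u = 0 := by rw [← conj_vinner, huu, map_zero]
  have h := finner_self (rankOne u v + rankOne u' v')
  simp only [finner_add_left, finner_add_right, finner_rankOne, rankOne_mulVec, vinner_mul_right,
    huu, huu', vinner_self] at h
  have h2 : ((vnormSq u * vnormSq v + vnormSq u' * vnormSq v' : ℝ) : ℂ)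
      = (frobSq (rankOne u v + rankOne u' v') : ℂ) := by
    rw [← h]; push_cast; ring
  exact (Complex.ofReal_injective h2).symm

lemma vnorm_mulVec_le_frob {K N : ℕ} (Z : Matrix (Fin K) (Fin N) ℂ) (v : Fin N → ℂ) :
    vnorm (Z.mulVec v) ≤ frob Z * vnorm v := by
  rw [vnorm, frob, vnorm, ← Real.sqrt_mul (frobSq_nonneg Z)]
  refine Real.sqrt_le_sqrt ?_
  rw [vnormSq, frobSq, Finset.sum_mul]
  refine Finset.sum_le_sum fun k _ => ?_
  have h := norm_vinner_le (fun j => conj (Z k j)) v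
  have h2 := pow_le_pow_left₀ (norm_nonneg _) h 2
  rw [mul_pow, vnorm_sq, vnorm_sq] at h2
  simpa [vinner, vnormSq, Matrix.mulVec, dotProduct] using h2

lemma bddAbove_opNorm {K N : ℕ} (Z : Matrix (Fin K) (Fin N) ℂ) :
    BddAbove {r : ℝ | ∃ v : Fin N → ℂ, vnorm v ≤ 1 ∧ r = vnorm (Z.mulVec v)} := by
  refine ⟨frob Z, ?_⟩
  rintro r ⟨v, hv, rfl⟩
  exact (vnorm_mulVec_le_frob Z v).trans (mul_le_of_le_one_right (Real.sqrt_nonneg _) hv)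

lemma opNorm_nonneg {K N : ℕ} (Z : Matrix (Fin K) (Fin N) ℂ) : 0 ≤ opNorm Z := by
  refine Real.sSup_nonneg ?_
  rintro r ⟨v, -, rfl⟩
  exact vnorm_nonneg _

lemma vnorm_mulVec_le {K N : ℕ} (Z : Matrix (Fin K) (Fin N) ℂ) (v : Fin N → ℂ) :
    vnorm (Z.mulVec v) ≤ opNorm Z * vnorm v := by
  rcases (vnorm_nonneg v).eq_or_lt with h | h
  · simpa [← h] using vnorm_mulVec_le_frob Z v
  · have hc : ‖((vnorm v : ℂ))⁻¹‖ = (vnorm v)⁻¹ := by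
      rw [norm_inv, Complex.norm_real, Real.norm_of_nonneg h.le]
    have hle : vnorm (Z.mulVec fun k => ((vnorm v : ℂ))⁻¹ * v k) ≤ opNorm Z := by
      refine le_csSup (bddAbove_opNorm Z) ⟨_, ?_, rfl⟩
      rw [vnorm_mul, hc, inv_mul_cancel₀ h.ne']
    have heq : (Z.mulVec fun k => ((vnorm v : ℂ))⁻¹ * v k)
        = fun k => ((vnorm v : ℂ))⁻¹ * Z.mulVec v k := by
      funext k
      simp only [Matrix.mulVec, dotProduct, Finset.mul_sum]
      exact Finset.sum_congr rfl fun _ _ => by ring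
    rw [heq, vnorm_mul, hc, inv_mul_le_iff₀ h] at hle
    linarith [mul_comm (opNorm Z) (vnorm v)]

lemma norm_vinner_mulVec_le {K N : ℕ} (M : Matrix (Fin K) (Fin N) ℂ) (u : Fin K → ℂ)
    (v : Fin N → ℂ) : ‖vinner u (M.mulVec v)‖ ≤ opNorm M * (vnorm u * vnorm v) := by
  have h1 := norm_vinner_le u (M.mulVec v)
  have h2 := mul_le_mul_of_nonneg_left (vnorm_mulVec_le M v) (vnorm_nonneg u)
  linarith [mul_left_comm (vnorm u) (opNorm M) (vnorm v)]

/-- Duality between the operator and nuclear norms for a difference of two rank-one matrices. -/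
lemma norm_finner_rankOne_sub_le {K N : ℕ} (M : Matrix (Fin K) (Fin N) ℂ)
    (h h0 : Fin K → ℂ) (x x0 : Fin N → ℂ) (hne : vnormSq h0 ≠ 0) :
    ‖finner (rankOne h x - rankOne h0 x0) M‖
      ≤ Real.sqrt 2 * opNorm M * frob (rankOne h x - rankOne h0 x0) := by
  set c : ℂ := vinner h0 h / (vnormSq h0 : ℂ) with hc
  set p : Fin K → ℂ := fun k => h k - c * h0 k with hp
  set w : Fin N → ℂ := fun j => conj c * x j - x0 j with hw
  have hdec : rankOne h x - rankOne h0 x0 = rankOne h0 w + rankOne p x := by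
    ext k j
    simp only [rankOne, Matrix.sub_apply, Matrix.add_apply, Matrix.of_apply, hp, hw, map_sub,
      map_mul, Complex.conj_conj]
    ring
  have horth : vinner h0 p = 0 := by
    have hne' : (vnormSq h0 : ℂ) ≠ 0 := by exact_mod_cast hne
    rw [hp, vinner_sub_right, vinner_mul_right, vinner_self, hc, div_mul_cancel₀ _ hne', sub_self]
  have hfro : frob (rankOne h x - rankOne h0 x0) ^ 2
      = (vnorm h0 * vnorm w) ^ 2 + (vnorm p * vnorm x) ^ 2 := by
    rw [frob_sq, hdec, frobSq_rankOne_add_rankOne _ _ horth, mul_pow, mul_pow, vnorm_sq, vnorm_sq,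
      vnorm_sq, vnorm_sq]
  have hsum : vnorm h0 * vnorm w + vnorm p * vnorm x
      ≤ Real.sqrt 2 * frob (rankOne h x - rankOne h0 x0) := by
    refine abs_le_of_sq_le_sq' ?_ (by unfold frob; positivity) |>.2
    rw [mul_pow, hfro, Real.sq_sqrt (by norm_num)]
    nlinarith [sq_nonneg (vnorm h0 * vnorm w - vnorm p * vnorm x)]
  calc ‖finner (rankOne h x - rankOne h0 x0) M‖
      ≤ ‖vinner h0 (M.mulVec w)‖ + ‖vinner p (M.mulVec x)‖ := by
        rw [hdec, finner_add_left, finner_rankOne, finner_rankOne]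
        exact norm_add_le _ _
    _ ≤ opNorm M * (vnorm h0 * vnorm w + vnorm p * vnorm x) := by
        rw [mul_add]
        exact add_le_add (norm_vinner_mulVec_le _ _ _) (norm_vinner_mulVec_le _ _ _)
    _ ≤ opNorm M * (Real.sqrt 2 * frob (rankOne h x - rankOne h0 x0)) :=
        mul_le_mul_of_nonneg_left hsum (opNorm_nonneg M)
    _ = _ := by ring

/-! ### The measurement operator and its adjoint -/

lemma AadjNorm_nonneg {K N L s : ℕ} (b : Fin L → Fin K → ℂ) (a : Fin s → Fin L → Fin N → ℂ)
    (e : Fin L → ℂ) : 0 ≤ AadjNorm b a e :=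
  Real.iSup_nonneg fun _ => opNorm_nonneg _

lemma opNorm_calAdj_le {K N L s : ℕ} (b : Fin L → Fin K → ℂ) (a : Fin s → Fin L → Fin N → ℂ)
    (e : Fin L → ℂ) (i : Fin s) : opNorm (calAdj b (a i) e) ≤ AadjNorm b a e :=
  le_ciSup (f := fun i => opNorm (calAdj b (a i) e)) (Set.finite_range _).bddAbove i

lemma vinner_calAdj {K N L : ℕ} (b : Fin L → Fin K → ℂ) (a : Fin L → Fin N → ℂ)
    (Z : Matrix (Fin K) (Fin N) ℂ) (z : Fin L → ℂ) :
    vinner (calAi b a Z) z = finner Z (calAdj b a z) := by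
  simp only [vinner, calAi, finner, calAdj, Matrix.mulVec, dotProduct, Matrix.of_apply,
    Finset.mul_sum, Finset.sum_mul, map_sum, map_mul, Complex.conj_conj]
  rw [Finset.sum_comm]
  refine Finset.sum_congr rfl fun k _ => ?_
  rw [Finset.sum_comm]
  exact Finset.sum_congr rfl fun j _ => Finset.sum_congr rfl fun l _ => by ring

lemma vinner_calA {K N L s : ℕ} (b : Fin L → Fin K → ℂ) (a : Fin s → Fin L → Fin N → ℂ)
    (Z : Fin s → Matrix (Fin K) (Fin N) ℂ) (z : Fin L → ℂ) :
    vinner (calA b a Z) z = ∑ i, finner (Z i) (calAdj b (a i) z) := by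
  simp only [← vinner_calAdj]
  simp only [vinner, calA, map_sum, Finset.sum_mul]
  exact Finset.sum_comm

lemma calA_sub {K N L s : ℕ} (b : Fin L → Fin K → ℂ) (a : Fin s → Fin L → Fin N → ℂ)
    (Z W : Fin s → Matrix (Fin K) (Fin N) ℂ) (l : Fin L) :
    calA b a (fun i => Z i - W i) l = calA b a Z l - calA b a W l := by
  simp only [calA, calAi, ← Finset.sum_sub_distrib, Matrix.sub_mulVec, ← vinner_sub_right]
  rfl

lemma Fobj_eq {K N L s : ℕ} (b : Fin L → Fin K → ℂ) (a : Fin s → Fin L → Fin N → ℂ)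
    (h0 : Fin s → Fin K → ℂ) (x0 : Fin s → Fin N → ℂ) (e : Fin L → ℂ)
    (h : Fin s → Fin K → ℂ) (x : Fin s → Fin N → ℂ) :
    Fobj b a h0 x0 e h x = vnormSq (calA b a fun i => Hmap h x i - Hmap h0 x0 i)
      - 2 * (vinner (calA b a fun i => Hmap h x i - Hmap h0 x0 i) e).re + vnormSq e := by
  rw [← vnormSq_sub, Fobj]
  congr 1
  funext l
  rw [calA_sub, yvec]
  ring

lemma sum_frob_le {K N s : ℕ} (Z : Fin s → Matrix (Fin K) (Fin N) ℂ) :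
    ∑ i, frob (Z i) ≤ Real.sqrt s * famFrob Z := by
  have := Real.sum_mul_le_sqrt_mul_sqrt Finset.univ (fun _ : Fin s => (1 : ℝ))
    (fun i => frob (Z i))
  simpa [frob_sq, famFrob, famFrobSq] using this

lemma norm_finner_calAdj_le {K N L s : ℕ} (b : Fin L → Fin K → ℂ)
    (a : Fin s → Fin L → Fin N → ℂ) (h0 : Fin s → Fin K → ℂ) (x0 : Fin s → Fin N → ℂ)
    (e : Fin L → ℂ) (h : Fin s → Fin K → ℂ) (x : Fin s → Fin N → ℂ) (i : Fin s)
    (hne : vnormSq (h0 i) ≠ 0) :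
    ‖finner (Hmap h x i - Hmap h0 x0 i) (calAdj b (a i) e)‖
      ≤ Real.sqrt 2 * AadjNorm b a e * frob (Hmap h x i - Hmap h0 x0 i) := by
  refine (norm_finner_rankOne_sub_le _ _ _ _ _ hne).trans ?_
  exact mul_le_mul_of_nonneg_right (mul_le_mul_of_nonneg_left (opNorm_calAdj_le b a e i)
    (Real.sqrt_nonneg _)) (Real.sqrt_nonneg _)

lemma abs_re_vinner_calA_le {K N L s : ℕ} (b : Fin L → Fin K → ℂ)
    (a : Fin s → Fin L → Fin N → ℂ) (h0 : Fin s → Fin K → ℂ) (x0 : Fin s → Fin N → ℂ)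
    (e : Fin L → ℂ) (h : Fin s → Fin K → ℂ) (x : Fin s → Fin N → ℂ)
    (hne : ∀ i, vnormSq (h0 i) ≠ 0) :
    |(vinner (calA b a fun i => Hmap h x i - Hmap h0 x0 i) e).re|
      ≤ Real.sqrt 2 * Real.sqrt s * AadjNorm b a e
          * famFrob (fun i => Hmap h x i - Hmap h0 x0 i) := by
  have hA := AadjNorm_nonneg b a e
  refine (Complex.abs_re_le_norm _).trans ?_
  rw [vinner_calA]
  refine (norm_sum_le _ _).trans ((Finset.sum_le_sum fun i _ =>
    norm_finner_calAdj_le b a h0 x0 e h x i (hne i)).trans ?_)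
  rw [← Finset.mul_sum]
  have := mul_le_mul_of_nonneg_left (sum_frob_le fun i => Hmap h x i - Hmap h0 x0 i)
    (mul_nonneg (Real.sqrt_nonneg 2) hA)
  linarith

/-! ### Derivative of the objective along a segment -/

/-- The complex pairing `⟨w, g⟩` of two stacked points of `ℂ^{s(K+N)}`. -/
def pairInner {K N s : ℕ} (wh : Fin s → Fin K → ℂ) (wx : Fin s → Fin N → ℂ)
    (gh : Fin s → Fin K → ℂ) (gx : Fin s → Fin N → ℂ) : ℂ :=
  ∑ i, vinner (wh i) (gh i) + ∑ i, vinner (wx i) (gx i)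

lemma re_sum_vinner_le {n s : ℕ} (w g : Fin s → Fin n → ℂ) :
    (∑ i, vinner (w i) (g i)).re
      ≤ Real.sqrt (∑ i, vnormSq (w i)) * Real.sqrt (∑ i, vnormSq (g i)) := by
  have := Real.sum_mul_le_sqrt_mul_sqrt Finset.univ (fun i => vnorm (w i)) (fun i => vnorm (g i))
  simp only [vnorm_sq] at this
  refine le_trans ?_ this
  rw [Complex.re_sum]
  exact Finset.sum_le_sum fun i _ => (Complex.re_le_norm _).trans (norm_vinner_le _ _)

lemma re_pairInner_le {K N s : ℕ} (wh : Fin s → Fin K → ℂ) (wx : Fin s → Fin N → ℂ)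
    (gh : Fin s → Fin K → ℂ) (gx : Fin s → Fin N → ℂ) :
    (pairInner wh wx gh gx).re ≤ pairNorm wh wx * pairNorm gh gx := by
  have hn : ∀ {n : ℕ} (w : Fin s → Fin n → ℂ), 0 ≤ ∑ i, vnormSq (w i) :=
    fun w => Finset.sum_nonneg fun _ _ => vnormSq_nonneg _
  have h1 := re_sum_vinner_le wh gh
  have h2 := re_sum_vinner_le wx gx
  rw [pairInner, Complex.add_re]
  refine (add_le_add h1 h2).trans (abs_le_of_sq_le_sq' ?_ ?_).2
  · rw [mul_pow, pairNorm, pairNorm, Real.sq_sqrt (add_nonneg (hn _) (hn _)),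
      Real.sq_sqrt (add_nonneg (hn _) (hn _))]
    have e1 := Real.sq_sqrt (hn wh)
    have e2 := Real.sq_sqrt (hn wx)
    have e3 := Real.sq_sqrt (hn gh)
    have e4 := Real.sq_sqrt (hn gx)
    rw [← e1, ← e2, ← e3, ← e4]
    simp only [Real.sqrt_sq (Real.sqrt_nonneg _)]
    nlinarith [sq_nonneg (Real.sqrt (∑ i, vnormSq (wh i)) * Real.sqrt (∑ i, vnormSq (gx i))
      - Real.sqrt (∑ i, vnormSq (wx i)) * Real.sqrt (∑ i, vnormSq (gh i)))]
  · exact mul_nonneg (Real.sqrt_nonneg _) (Real.sqrt_nonneg _)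

lemma vinner_shiftV_right {n s : ℕ} (c : Fin n → ℂ) (u w : Fin s → Fin n → ℂ) (t : ℝ)
    (i : Fin s) : vinner c (shiftV u w t i) = vinner c (u i) + (t : ℂ) * vinner c (w i) := by
  unfold shiftV
  rw [vinner_add_right, vinner_mul_right]

lemma hasDerivAt_vinner_shiftV_right {n s : ℕ} (c : Fin n → ℂ) (u w : Fin s → Fin n → ℂ) (t : ℝ)
    (i : Fin s) : HasDerivAt (fun τ : ℝ => vinner c (shiftV u w τ i)) (vinner c (w i)) t := by
  simp only [vinner_shiftV_right]
  simpa using ((Complex.ofRealCLM.hasDerivAt (x := t)).mul_const (vinner c (w i))).const_add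
    (vinner c (u i))

lemma hasDerivAt_vinner_shiftV_left {n s : ℕ} (c : Fin n → ℂ) (u w : Fin s → Fin n → ℂ) (t : ℝ)
    (i : Fin s) : HasDerivAt (fun τ : ℝ => vinner (shiftV u w τ i) c) (vinner (w i) c) t := by
  simp only [← conj_vinner c]
  exact (hasDerivAt_vinner_shiftV_right c u w t i).star

lemma hasDerivAt_norm_sq_complex {f : ℝ → ℂ} {f' : ℂ} {t : ℝ} (hf : HasDerivAt f f' t) :
    HasDerivAt (fun τ => ‖f τ‖ ^ 2) (2 * (conj f' * f t).re) t := by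
  convert hf.norm_sq using 1
  rw [Complex.inner]
  simp only [Complex.mul_re, Complex.conj_re, Complex.conj_im]
  ring

lemma hasDerivAt_vnormSq {n : ℕ} {f : ℝ → Fin n → ℂ} {f' : Fin n → ℂ} {t : ℝ}
    (hf : ∀ k, HasDerivAt (fun τ => f τ k) (f' k) t) :
    HasDerivAt (fun τ => vnormSq (f τ)) (2 * (vinner f' (f t)).re) t := by
  have := HasDerivAt.fun_sum (u := Finset.univ) fun k _ => hasDerivAt_norm_sq_complex (hf k)
  refine this.congr_deriv ?_
  rw [vinner, Complex.re_sum, Finset.mul_sum]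

lemma hasDerivAt_shiftV {n s : ℕ} (u w : Fin s → Fin n → ℂ) (t : ℝ) (i : Fin s) (k : Fin n) :
    HasDerivAt (fun τ : ℝ => shiftV u w τ i k) (w i k) t := by
  unfold shiftV
  simpa using ((Complex.ofRealCLM.hasDerivAt (x := t)).mul_const (w i k)).const_add (u i k)

lemma hasDerivAt_G0 (z : ℝ) : HasDerivAt G0 (G0' z) z := by
  have key : ∀ y, |G0 y - G0 z - (y - z) * G0' z| ≤ (y - z) ^ 2 := by
    intro y
    unfold G0 G0'
    rw [abs_le]
    rcases le_total (y - 1) 0 with hy | hy <;> rcases le_total (z - 1) 0 with hz | hz <;>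
      simp only [max_eq_left, max_eq_right, hy, hz] <;> constructor <;>
      nlinarith [sq_nonneg (y - z), mul_nonneg (sub_nonneg.2 hy) (sub_nonneg.2 hz),
        sq_nonneg (y - 1), sq_nonneg (z - 1)]
  rw [hasDerivAt_iff_isLittleO]
  refine Asymptotics.IsBigO.trans_isLittleO (g := fun y => (y - z) ^ 2) ?_ ?_
  · refine Asymptotics.IsBigO.of_bound 1 (Filter.Eventually.of_forall fun y => ?_)
    simpa [abs_of_nonneg (sq_nonneg (y - z))] using key y
  · have := (Asymptotics.isLittleO_pow_id (𝕜 := ℝ) (one_lt_two)).comp_tendsto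
      (tendsto_sub_nhds_zero_iff.2 (Filter.tendsto_id (x := nhds z)))
    simpa [Function.comp_def] using this

lemma calA_Hmap {K N L s : ℕ} (b : Fin L → Fin K → ℂ) (a : Fin s → Fin L → Fin N → ℂ)
    (h : Fin s → Fin K → ℂ) (x : Fin s → Fin N → ℂ) (l : Fin L) :
    calA b a (Hmap h x) l = ∑ i, vinner (x i) (a i l) * vinner (b l) (h i) := by
  simp only [calA, calAi, Hmap, rankOne_mulVec, vinner_mul_right]

lemma vinner_gradFh {K N L s : ℕ} (b : Fin L → Fin K → ℂ) (a : Fin s → Fin L → Fin N → ℂ)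
    (h0 : Fin s → Fin K → ℂ) (x0 : Fin s → Fin N → ℂ) (e : Fin L → ℂ)
    (h : Fin s → Fin K → ℂ) (x : Fin s → Fin N → ℂ) (i : Fin s) (w : Fin K → ℂ) :
    vinner w (gradFh b a h0 x0 e h x i)
      = vinner (fun l => vinner (x i) (a i l) * vinner (b l) w) (residual b a h0 x0 e h x) := by
  rw [gradFh, ← finner_rankOne, ← vinner_calAdj]
  congr 1
  funext l
  simp only [calAi, rankOne_mulVec, vinner_mul_right]

lemma vinner_conjTranspose_mulVec {K N : ℕ} (M : Matrix (Fin K) (Fin N) ℂ) (u : Fin K → ℂ)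
    (v : Fin N → ℂ) : vinner v (M.conjTranspose.mulVec u) = conj (vinner u (M.mulVec v)) := by
  simp only [vinner, Matrix.mulVec, dotProduct, Matrix.conjTranspose_apply, map_sum, map_mul,
    Complex.conj_conj, Finset.mul_sum, RCLike.star_def]
  rw [Finset.sum_comm]
  exact Finset.sum_congr rfl fun _ _ => Finset.sum_congr rfl fun _ _ => by ring

lemma re_vinner_gradFx {K N L s : ℕ} (b : Fin L → Fin K → ℂ) (a : Fin s → Fin L → Fin N → ℂ)
    (h0 : Fin s → Fin K → ℂ) (x0 : Fin s → Fin N → ℂ) (e : Fin L → ℂ)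
    (h : Fin s → Fin K → ℂ) (x : Fin s → Fin N → ℂ) (i : Fin s) (w : Fin N → ℂ) :
    (vinner w (gradFx b a h0 x0 e h x i)).re
      = (vinner (fun l => vinner w (a i l) * vinner (b l) (h i))
          (residual b a h0 x0 e h x)).re := by
  rw [gradFx, vinner_conjTranspose_mulVec, Complex.conj_re, ← finner_rankOne, ← vinner_calAdj]
  congr 2
  funext l
  simp only [calAi, rankOne_mulVec, vinner_mul_right]

lemma hasDerivAt_residual {K N L s : ℕ} (b : Fin L → Fin K → ℂ) (a : Fin s → Fin L → Fin N → ℂ)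
    (h0 : Fin s → Fin K → ℂ) (x0 : Fin s → Fin N → ℂ) (e : Fin L → ℂ)
    (h wh : Fin s → Fin K → ℂ) (x wx : Fin s → Fin N → ℂ) (t : ℝ) (l : Fin L) :
    HasDerivAt (fun τ : ℝ => residual b a h0 x0 e (shiftV h wh τ) (shiftV x wx τ) l)
      (∑ i, (vinner (wx i) (a i l) * vinner (b l) (shiftV h wh t i)
        + vinner (shiftV x wx t i) (a i l) * vinner (b l) (wh i))) t := by
  unfold residual
  simp only [calA_Hmap]
  exact (HasDerivAt.fun_sum fun i _ => (hasDerivAt_vinner_shiftV_left (a i l) x wx t i).mul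
    (hasDerivAt_vinner_shiftV_right (b l) h wh t i)).sub_const _

lemma vinner_sum_left {n m : ℕ} (u : Fin n → ℂ) (v : Fin m → Fin n → ℂ) :
    vinner (fun k => ∑ l, v l k) u = ∑ l, vinner (v l) u := by
  simp only [vinner, Finset.sum_mul, map_sum]
  exact Finset.sum_comm

lemma hasDerivAt_Fobj {K N L s : ℕ} (b : Fin L → Fin K → ℂ) (a : Fin s → Fin L → Fin N → ℂ)
    (h0 : Fin s → Fin K → ℂ) (x0 : Fin s → Fin N → ℂ) (e : Fin L → ℂ)
    (h wh : Fin s → Fin K → ℂ) (x wx : Fin s → Fin N → ℂ) (t : ℝ) :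
    HasDerivAt (fun τ : ℝ => Fobj b a h0 x0 e (shiftV h wh τ) (shiftV x wx τ))
      (2 * (pairInner wh wx (gradFh b a h0 x0 e (shiftV h wh t) (shiftV x wx t))
        (gradFx b a h0 x0 e (shiftV h wh t) (shiftV x wx t))).re) t := by
  have := hasDerivAt_vnormSq (hasDerivAt_residual b a h0 x0 e h wh x wx t)
  refine this.congr_deriv (congrArg (2 * ·) ?_)
  rw [vinner_sum_left, pairInner, Complex.add_re, Complex.re_sum, Complex.re_sum, Complex.re_sum,
    ← Finset.sum_add_distrib]
  refine Finset.sum_congr rfl fun i _ => ?_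
  rw [re_vinner_gradFx, vinner_gradFh, vinner_add_left, Complex.add_re, add_comm]

lemma hasDerivAt_Greg {K N L s : ℕ} (b : Fin L → Fin K → ℂ) (ρ μ : ℝ) (dd : Fin s → ℝ)
    (h wh : Fin s → Fin K → ℂ) (x wx : Fin s → Fin N → ℂ) (t : ℝ) :
    HasDerivAt (fun τ : ℝ => Greg b ρ μ dd (shiftV h wh τ) (shiftV x wx τ))
      (2 * (pairInner wh wx (gradGh b ρ μ dd (shiftV h wh t))
        (gradGx ρ dd (shiftV x wx t))).re) t := by
  have h1 : ∀ i, HasDerivAt (fun τ : ℝ => Gi b ρ μ (dd i) (shiftV h wh τ i) (shiftV x wx τ i))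
      _ t := fun i =>
    ((((hasDerivAt_G0 _).comp t
        ((hasDerivAt_vnormSq (hasDerivAt_shiftV h wh t i)).div_const (2 * dd i))).add
      ((hasDerivAt_G0 _).comp t
        ((hasDerivAt_vnormSq (hasDerivAt_shiftV x wx t i)).div_const (2 * dd i)))).add
      (HasDerivAt.fun_sum (u := Finset.univ) fun l _ => (hasDerivAt_G0 _).comp t
        (((hasDerivAt_norm_sq_complex (hasDerivAt_vinner_shiftV_right (b l) h wh t i)).const_mul
          (L : ℝ)).div_const (8 * dd i * μ ^ 2)))).const_mul ρ
  have := HasDerivAt.fun_sum (u := Finset.univ) fun i _ => h1 i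
  refine this.congr_deriv ?_
  rw [pairInner, ← Finset.sum_add_distrib, Complex.re_sum, Finset.mul_sum]
  refine Finset.sum_congr rfl fun i _ => ?_
  have hg : ∀ (c : ℝ) (z : ℂ), ((c : ℂ) * z).re = c * z.re := fun c z => Complex.re_ofReal_mul c z
  have hh : vinner (wh i) (gradGh b ρ μ dd (shiftV h wh t) i)
      = ((ρ / (2 * dd i) : ℝ) : ℂ) *
        (((G0' (vnormSq (shiftV h wh t i) / (2 * dd i)) : ℝ) : ℂ) * vinner (wh i) (shiftV h wh t i)
        + (((L : ℝ) / (4 * μ ^ 2) : ℝ) : ℂ) *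
          ∑ l, ((G0' ((L : ℝ) * ‖vinner (b l) (shiftV h wh t i)‖ ^ 2 / (8 * dd i * μ ^ 2)) : ℝ) : ℂ)
            * (conj (vinner (b l) (wh i)) * vinner (b l) (shiftV h wh t i))) := by
    unfold gradGh
    rw [vinner_mul_right, vinner_add_right, vinner_mul_right, vinner_mul_right, vinner_sum_right]
    simp only [vinner_mul_right, conj_vinner]
    congr 4
    funext l
    ring
  have hx : vinner (wx i) (gradGx ρ dd (shiftV x wx t) i)
      = ((ρ / (2 * dd i) : ℝ) : ℂ) * (((G0' (vnormSq (shiftV x wx t i) / (2 * dd i)) : ℝ) : ℂ)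
        * vinner (wx i) (shiftV x wx t i)) := by
    unfold gradGx
    rw [vinner_mul_right, vinner_mul_right]
  rw [hh, hx, Complex.add_re, hg, hg, Complex.add_re, hg, hg, hg, Complex.re_sum]
  simp only [hg]
  simp only [mul_add, Finset.mul_sum]
  have hl : ∀ l : Fin L, 2 * (ρ / (2 * dd i) * ((L : ℝ) / (4 * μ ^ 2) *
      (G0' ((L : ℝ) * ‖vinner (b l) (shiftV h wh t i)‖ ^ 2 / (8 * dd i * μ ^ 2)) *
        (conj (vinner (b l) (wh i)) * vinner (b l) (shiftV h wh t i)).re)))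
      = ρ * (G0' ((L : ℝ) * ‖vinner (b l) (shiftV h wh t i)‖ ^ 2 / (8 * dd i * μ ^ 2)) *
        ((L : ℝ) * (2 * (conj (vinner (b l) (wh i)) * vinner (b l) (shiftV h wh t i)).re)
          / (8 * dd i * μ ^ 2))) := by
    intro l
    generalize G0' _ = g
    simp only [div_eq_mul_inv, mul_inv]
    ring
  simp only [hl]
  generalize G0' (vnormSq _ / _) = g1
  generalize G0' (vnormSq _ / _) = g2
  simp only [div_eq_mul_inv, mul_inv]
  ring

lemma hasDerivAt_Ftil {K N L s : ℕ} (b : Fin L → Fin K → ℂ) (a : Fin s → Fin L → Fin N → ℂ)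
    (h0 : Fin s → Fin K → ℂ) (x0 : Fin s → Fin N → ℂ) (e : Fin L → ℂ)
    (ρ μ : ℝ) (dd : Fin s → ℝ)
    (h wh : Fin s → Fin K → ℂ) (x wx : Fin s → Fin N → ℂ) (t : ℝ) :
    HasDerivAt (fun τ : ℝ => Ftil b a h0 x0 e ρ μ dd (shiftV h wh τ) (shiftV x wx τ))
      (2 * (pairInner wh wx (gradH b a h0 x0 e ρ μ dd (shiftV h wh t) (shiftV x wx t))
        (gradX b a h0 x0 e ρ μ dd (shiftV h wh t) (shiftV x wx t))).re) t := by
  have := (hasDerivAt_Fobj b a h0 x0 e h wh x wx t).add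
    (hasDerivAt_Greg b ρ μ dd h wh x wx t)
  refine this.congr_deriv ?_
  rw [← mul_add, ← Complex.add_re]
  congr 2
  simp only [pairInner]
  unfold gradH gradX
  simp only [vinner_add_right, Finset.sum_add_distrib]
  ring

/-! ### The descent step -/

/-- If `φ' ≤ -c (1 - T)` as long as the segment `[0, T]` stays in the region `P ∩ {φ ≤ M}`, and
`P` cannot be left from within that region, then `[0, 1]` stays in it and `φ` decreases by
`c / 2`. -/
lemma segment_descent {φ φ' : ℝ → ℝ} {P : ℝ → Prop} {M c : ℝ} (hc : 0 < c)
    (hφ : ∀ t, HasDerivAt φ (φ' t) t) (hPc : IsClosed {τ | P τ})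
    (hPo : ∀ τ, P τ → φ τ ≤ M → ∀ᶠ σ in nhds τ, P σ) (hP0 : P 0) (hφ0 : φ 0 ≤ M)
    (hd : ∀ T ∈ Set.Icc (0 : ℝ) 1, (∀ τ ∈ Set.Icc (0 : ℝ) T, P τ ∧ φ τ ≤ M) →
      φ' T ≤ -c * (1 - T)) :
    P 1 ∧ φ 1 ≤ φ 0 - c / 2 := by
  have hcont : Continuous φ := continuous_iff_continuousAt.2 fun t => (hφ t).continuousAt
  have hScl : IsClosed {τ | P τ ∧ φ τ ≤ M} := hPc.inter (isClosed_le hcont continuous_const)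
  set s : Set ℝ := {T | ∀ σ ∈ Set.Icc (0 : ℝ) 1, P (σ * T) ∧ φ (σ * T) ≤ M} with hs
  have hscl : IsClosed s := by
    have : s = ⋂ σ ∈ Set.Icc (0 : ℝ) 1, (fun T => σ * T) ⁻¹' {τ | P τ ∧ φ τ ≤ M} := by
      ext T; simp [hs]
    rw [this]
    exact isClosed_biInter fun σ _ => hScl.preimage (continuous_const.mul continuous_id)
  have hmem : ∀ T, 0 ≤ T → (T ∈ s ↔ ∀ τ ∈ Set.Icc (0 : ℝ) T, P τ ∧ φ τ ≤ M) := by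
    intro T hT
    constructor
    · intro h τ hτ
      rcases hT.eq_or_lt with h0 | h0
      · have : τ = 0 := le_antisymm (h0 ▸ hτ.2) hτ.1
        subst this; exact ⟨hP0, hφ0⟩
      · have := h (τ / T) ⟨div_nonneg hτ.1 hT, (div_le_one h0).2 hτ.2⟩
        rwa [div_mul_cancel₀ _ h0.ne'] at this
    · intro h σ hσ
      exact h _ ⟨mul_nonneg hσ.1 hT, mul_le_of_le_one_left hT hσ.2⟩
  have hall : Set.Icc (0 : ℝ) 1 ⊆ s := by
    refine IsClosed.Icc_subset_of_forall_mem_nhdsWithin (hscl.inter isClosed_Icc) ?_ ?_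
    · exact fun σ _ => by simpa using ⟨hP0, hφ0⟩
    · rintro T ⟨hTs, hT0, hT1⟩
      have hT := (hmem T hT0).1 hTs
      have hneg : φ' T < 0 := (hd T ⟨hT0, hT1.le⟩ hT).trans_lt (by nlinarith)
      obtain ⟨hPT, hφT⟩ := hT T ⟨hT0, le_rfl⟩
      have hslope : ∀ᶠ σ in nhdsWithin T (Set.Ioi T), slope φ T σ < 0 :=
        ((hasDerivAt_iff_tendsto_slope.1 (hφ T)).mono_left
          (nhdsWithin_mono _ fun σ hσ => ne_of_gt hσ)).eventually (gt_mem_nhds hneg)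
      have hev : ∀ᶠ σ in nhdsWithin T (Set.Ioi T), P σ ∧ φ σ ≤ M := by
        filter_upwards [hslope, nhdsWithin_le_nhds (hPo T hPT hφT), self_mem_nhdsWithin]
          with σ h1 h2 h3
        refine ⟨h2, ?_⟩
        rw [slope_def_field, div_lt_iff₀ (sub_pos.2 h3)] at h1
        linarith
      obtain ⟨r, hr, hsub⟩ := mem_nhdsGT_iff_exists_Ioo_subset.1 hev
      refine mem_nhdsGT_iff_exists_Ioo_subset.2 ⟨r, hr, fun σ hσ => ?_⟩
      refine (hmem σ (hT0.trans hσ.1.le)).2 fun τ hτ => ?_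
      rcases le_or_gt τ T with h | h
      · exact hT τ ⟨hτ.1, h⟩
      · exact hsub ⟨h, hτ.2.trans_lt hσ.2⟩
  have h1 := (hmem 1 zero_le_one).1 (hall ⟨zero_le_one, le_rfl⟩)
  refine ⟨(h1 1 ⟨zero_le_one, le_rfl⟩).1, ?_⟩
  have hψ : ∀ t, HasDerivAt (fun t => φ t + c * (t - t ^ 2 / 2)) (φ' t + c * (1 - t)) t := by
    intro t
    refine ((hφ t).add (((hasDerivAt_id t).sub (((hasDerivAt_id t).pow 2).div_const 2)).const_mul
      c)).congr_deriv ?_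
    simp
  have hanti : AntitoneOn (fun t => φ t + c * (t - t ^ 2 / 2)) (Set.Icc 0 1) := by
    refine antitoneOn_of_deriv_nonpos (convex_Icc 0 1)
      (fun t _ => (hψ t).continuousAt.continuousWithinAt)
      (fun t _ => (hψ t).differentiableAt.differentiableWithinAt) fun t ht => ?_
    rw [interior_Icc] at ht
    rw [(hψ t).deriv]
    have := hd t ⟨ht.1.le, ht.2.le⟩ fun τ hτ => h1 τ ⟨hτ.1, hτ.2.trans ht.2.le⟩
    linarith
  have := hanti (Set.left_mem_Icc.2 zero_le_one) (Set.right_mem_Icc.2 zero_le_one) zero_le_one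
  norm_num at this
  linarith

lemma shiftV_mul {n s : ℕ} (u w : Fin s → Fin n → ℂ) (T τ : ℝ) :
    shiftV u (fun i k => (T : ℂ) * w i k) τ = shiftV u w (τ * T) := by
  funext i k
  simp only [shiftV, Complex.ofReal_mul, mul_assoc]

lemma shiftV_zero {n s : ℕ} (u w : Fin s → Fin n → ℂ) : shiftV u w 0 = u := by
  funext i k
  simp [shiftV]

lemma pairNorm_mul {K N s : ℕ} (wh : Fin s → Fin K → ℂ) (wx : Fin s → Fin N → ℂ) (c : ℂ) :
    pairNorm (fun i k => c * wh i k) (fun i k => c * wx i k) = ‖c‖ * pairNorm wh wx := by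
  simp only [pairNorm, vnormSq_mul, ← Finset.mul_sum, ← mul_add]
  rw [Real.sqrt_mul (sq_nonneg _), Real.sqrt_sq (norm_nonneg _)]

lemma re_pairInner_self {K N s : ℕ} (gh : Fin s → Fin K → ℂ) (gx : Fin s → Fin N → ℂ) :
    (pairInner gh gx gh gx).re = pairNorm gh gx ^ 2 := by
  rw [pairNorm, Real.sq_sqrt (add_nonneg (Finset.sum_nonneg fun _ _ => vnormSq_nonneg _)
    (Finset.sum_nonneg fun _ _ => vnormSq_nonneg _))]
  simp [pairInner, vinner_self]

lemma pairInner_mul_left {K N s : ℕ} (wh : Fin s → Fin K → ℂ) (wx : Fin s → Fin N → ℂ)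
    (gh : Fin s → Fin K → ℂ) (gx : Fin s → Fin N → ℂ) (c : ℂ) :
    pairInner (fun i k => c * wh i k) (fun i k => c * wx i k) gh gx
      = conj c * pairInner wh wx gh gx := by
  simp only [pairInner, vinner_mul_left, ← Finset.mul_sum, ← mul_add]

lemma pairInner_sub_right {K N s : ℕ} (wh : Fin s → Fin K → ℂ) (wx : Fin s → Fin N → ℂ)
    (gh gh' : Fin s → Fin K → ℂ) (gx gx' : Fin s → Fin N → ℂ) :
    pairInner wh wx (fun i k => gh' i k - gh i k) (fun i k => gx' i k - gx i k)
      = pairInner wh wx gh' gx' - pairInner wh wx gh gx := by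
  simp only [pairInner, vinner_sub_right, Finset.sum_sub_distrib]
  ring

lemma continuous_deltaI_shiftV {K N s : ℕ} (h0i : Fin K → ℂ) (x0i : Fin N → ℂ) (d0i : ℝ)
    (h wh : Fin s → Fin K → ℂ) (x wx : Fin s → Fin N → ℂ) (i : Fin s) :
    Continuous fun τ : ℝ => deltaI h0i x0i d0i (shiftV h wh τ i) (shiftV x wx τ i) := by
  unfold deltaI frob frobSq rankOne shiftV
  simp only [Matrix.sub_apply, Matrix.of_apply, map_add, map_mul, Complex.conj_ofReal]
  fun_prop

lemma gradient_step {K N L s : ℕ} (b : Fin L → Fin K → ℂ) (a : Fin s → Fin L → Fin N → ℂ)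
    (h0 : Fin s → Fin K → ℂ) (x0 : Fin s → Fin N → ℂ) (d0 : Fin s → ℝ)
    (e : Fin L → ℂ) (μ ρ ε : ℝ) (dd : Fin s → ℝ)
    (hshrink : ∀ (h : Fin s → Fin K → ℂ) (x : Fin s → Fin N → ℂ),
      inNeps h0 x0 d0 ε h x → inNF b a h0 x0 e d0 ρ μ dd ε h x →
      ∀ i, deltaI (h0 i) (x0 i) (d0 i) (h i) (x i) < ε)
    (CL η : ℝ) (hCL : 0 < CL) (hη0 : 0 < η) (hηCL : η ≤ 1 / CL)
    (hLip : ∀ (h : Fin s → Fin K → ℂ) (x : Fin s → Fin N → ℂ)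
        (wh : Fin s → Fin K → ℂ) (wx : Fin s → Fin N → ℂ),
      (∀ τ : ℝ, τ ∈ Set.Icc (0 : ℝ) 1 →
        inNeps h0 x0 d0 ε (shiftV h wh τ) (shiftV x wx τ) ∧
        inNF b a h0 x0 e d0 ρ μ dd ε (shiftV h wh τ) (shiftV x wx τ)) →
      ∀ t : ℝ, t ∈ Set.Icc (0 : ℝ) 1 →
        Real.sqrt (gradDiffNormSq b a h0 x0 e ρ μ dd h x (shiftV h wh t) (shiftV x wx t))
          ≤ CL * t * pairNorm wh wx)
    (h h' : Fin s → Fin K → ℂ) (x x' : Fin s → Fin N → ℂ)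
    (hh' : ∀ i k, h' i k = h i k - (η : ℂ) * gradH b a h0 x0 e ρ μ dd h x i k)
    (hx' : ∀ i j, x' i j = x i j - (η : ℂ) * gradX b a h0 x0 e ρ μ dd h x i j)
    (hNe : inNeps h0 x0 d0 ε h x) (hNF : inNF b a h0 x0 e d0 ρ μ dd ε h x) :
    inNeps h0 x0 d0 ε h' x' ∧
      Ftil b a h0 x0 e ρ μ dd h' x'
        ≤ Ftil b a h0 x0 e ρ μ dd h x - η * gradNormSq b a h0 x0 e ρ μ dd h x := by
  set gh := gradH b a h0 x0 e ρ μ dd h x with hgh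
  set gx := gradX b a h0 x0 e ρ μ dd h x with hgx
  have hgnn : 0 ≤ gradNormSq b a h0 x0 e ρ μ dd h x :=
    add_nonneg (Finset.sum_nonneg fun _ _ => vnormSq_nonneg _)
      (Finset.sum_nonneg fun _ _ => vnormSq_nonneg _)
  have hgsq : pairNorm gh gx ^ 2 = gradNormSq b a h0 x0 e ρ μ dd h x := Real.sq_sqrt hgnn
  set wh : Fin s → Fin K → ℂ := fun i k => (-η : ℂ) * gh i k with hwh
  set wx : Fin s → Fin N → ℂ := fun i k => (-η : ℂ) * gx i k with hwx
  have hηn : ‖(-η : ℂ)‖ = η := by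
    rw [norm_neg, Complex.norm_real, Real.norm_of_nonneg hη0.le]
  have hwn : pairNorm wh wx = η * pairNorm gh gx := by rw [hwh, hwx, pairNorm_mul, hηn]
  have e1 : h' = shiftV h wh 1 := by
    funext i k; rw [hh', shiftV, hwh]; push_cast; ring
  have e2 : x' = shiftV x wx 1 := by
    funext i k; rw [hx', shiftV, hwx]; push_cast; ring
  rcases hgnn.eq_or_lt with hg0 | hgpos
  · have hsum := hg0.symm
    unfold gradNormSq at hsum
    have hz : ∀ {n : ℕ} (w : Fin s → Fin n → ℂ), ∑ i, vnormSq (w i) = 0 → ∀ i k, w i k = 0 := by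
      intro n w hw i k
      have h1 := (Finset.sum_eq_zero_iff_of_nonneg fun i _ => vnormSq_nonneg (w i)).1 hw i
        (Finset.mem_univ i)
      have h2 := (Finset.sum_eq_zero_iff_of_nonneg fun k _ => sq_nonneg ‖w i k‖).1 h1 k
        (Finset.mem_univ k)
      simpa using h2
    have hn1 : 0 ≤ ∑ i, vnormSq (gh i) := Finset.sum_nonneg fun _ _ => vnormSq_nonneg _
    have hn2 : 0 ≤ ∑ i, vnormSq (gx i) := Finset.sum_nonneg fun _ _ => vnormSq_nonneg _
    have z1 := hz gh (by linarith)
    have z2 := hz gx (by linarith)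
    have f1 : h' = h := by funext i k; rw [hh', z1]; simp
    have f2 : x' = x := by funext i k; rw [hx', z2]; simp
    rw [f1, f2, ← hg0]
    exact ⟨hNe, by simp⟩
  · have key := segment_descent (c := 2 * η * gradNormSq b a h0 x0 e ρ μ dd h x)
      (P := fun τ => inNeps h0 x0 d0 ε (shiftV h wh τ) (shiftV x wx τ))
      (M := ε ^ 2 * dtot d0 ^ 2 / (3 * (s : ℝ) * kappa d0 ^ 2) + vnormSq e)
      (by positivity) (hasDerivAt_Ftil b a h0 x0 e ρ μ dd h wh x wx) ?_ ?_ ?_ ?_ ?_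
    · rw [← e1, ← e2, shiftV_zero, shiftV_zero] at key
      exact ⟨key.1, by linarith [key.2]⟩
    · simp only [inNeps, Set.ofPred_forall]
      exact isClosed_iInter fun i =>
        isClosed_le (continuous_deltaI_shiftV _ _ _ _ _ _ _ i) continuous_const
    · intro τ hτ hM
      have hlt := hshrink _ _ hτ hM
      have : ∀ᶠ σ in nhds τ, ∀ i, deltaI (h0 i) (x0 i) (d0 i) (shiftV h wh σ i)
          (shiftV x wx σ i) < ε := Filter.eventually_all.2 fun i =>
        (continuous_deltaI_shiftV _ _ _ _ _ _ _ i).continuousAt.eventually (gt_mem_nhds (hlt i))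
      exact this.mono fun σ hσ i => (hσ i).le
    · simpa only [shiftV_zero] using hNe
    · simp only [shiftV_zero]
      exact hNF
    · intro T hT hseg
      have hL := hLip h x (fun i k => (T : ℂ) * wh i k) (fun i k => (T : ℂ) * wx i k)
        (fun τ hτ => by
          rw [shiftV_mul, shiftV_mul]
          exact hseg _ ⟨mul_nonneg hτ.1 hT.1, mul_le_of_le_one_left hT.1 hτ.2⟩)
        1 ⟨zero_le_one, le_rfl⟩
      rw [shiftV_mul, shiftV_mul, one_mul, pairNorm_mul, Complex.norm_real,
        Real.norm_of_nonneg hT.1, hwn, mul_one] at hL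
      set gh' := gradH b a h0 x0 e ρ μ dd (shiftV h wh T) (shiftV x wx T) with hgh'
      set gx' := gradX b a h0 x0 e ρ μ dd (shiftV h wh T) (shiftV x wx T) with hgx'
      have hL' : pairNorm (fun i k => gh' i k - gh i k) (fun i k => gx' i k - gx i k)
          ≤ CL * (T * (η * pairNorm gh gx)) := hL
      have hcs := re_pairInner_le wh wx (fun i k => gh' i k - gh i k) (fun i k => gx' i k - gx i k)
      rw [pairInner_sub_right, Complex.sub_re, hwn] at hcs
      have hself : (pairInner wh wx gh gx).re = -η * pairNorm gh gx ^ 2 := by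
        rw [hwh, hwx, pairInner_mul_left, ← re_pairInner_self]
        simp
      have hp0 : 0 ≤ pairNorm gh gx := Real.sqrt_nonneg _
      have hCη : CL * η ≤ 1 := by
        rw [le_div_iff₀ hCL] at hηCL; linarith
      have h3 := mul_le_mul_of_nonneg_left hL' (mul_nonneg hη0.le hp0)
      have h4 : η * pairNorm gh gx * (CL * (T * (η * pairNorm gh gx)))
          ≤ T * η * pairNorm gh gx ^ 2 := by
        have := mul_le_mul_of_nonneg_right hCη
          (mul_nonneg (mul_nonneg hT.1 hη0.le) (sq_nonneg (pairNorm gh gx)))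
        linarith
      rw [← hgsq]
      linarith

/-! ### Geometry of the basin of attraction -/

lemma one_le_kappa {s : ℕ} (hs : 0 < s) {d0 : Fin s → ℝ} (hd0 : ∀ i, 0 < d0 i) :
    1 ≤ kappa d0 := by
  have : Nonempty (Fin s) := ⟨⟨0, hs⟩⟩
  obtain ⟨m, hm⟩ := exists_eq_ciInf_of_finite (f := d0)
  rw [kappa, ← hm, one_le_div (hd0 m)]
  exact le_ciSup (Set.finite_range d0).bddAbove m

lemma dtot_le {s : ℕ} (hs : 0 < s) {d0 : Fin s → ℝ} (hd0 : ∀ i, 0 < d0 i) (i : Fin s) :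
    dtot d0 ≤ Real.sqrt s * kappa d0 * d0 i := by
  have : Nonempty (Fin s) := ⟨⟨0, hs⟩⟩
  obtain ⟨m, hm⟩ := exists_eq_ciInf_of_finite (f := d0)
  have hmi : d0 m ≤ d0 i := hm ▸ ciInf_le (Set.finite_range d0).bddBelow i
  have hk := one_le_kappa hs hd0
  have hsup : ∀ j, d0 j ≤ kappa d0 * d0 i := by
    intro j
    have h1 : d0 j ≤ ⨆ i, d0 i := le_ciSup (Set.finite_range d0).bddAbove j
    have h2 : (⨆ i, d0 i) = kappa d0 * d0 m := by
      rw [kappa, ← hm, div_mul_cancel₀ _ (hd0 m).ne']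
    rw [h2] at h1
    exact h1.trans (mul_le_mul_of_nonneg_left hmi (by linarith))
  have hnn : 0 ≤ kappa d0 * d0 i := mul_nonneg (by linarith) (hd0 i).le
  rw [mul_assoc, dtot]
  refine Real.sqrt_le_iff.2 ⟨by positivity, ?_⟩
  rw [mul_pow, Real.sq_sqrt (Nat.cast_nonneg s)]
  calc ∑ j, d0 j ^ 2 ≤ ∑ _j : Fin s, (kappa d0 * d0 i) ^ 2 :=
        Finset.sum_le_sum fun j _ => pow_le_pow_left₀ (hd0 j).le (hsup j) 2
    _ = _ := by simp

lemma dtot_pos {s : ℕ} (hs : 0 < s) {d0 : Fin s → ℝ} (hd0 : ∀ i, 0 < d0 i) : 0 < dtot d0 :=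
  Real.sqrt_pos.2 (Finset.sum_pos (fun i _ => pow_pos (hd0 i) 2) ⟨⟨0, hs⟩, Finset.mem_univ _⟩)

lemma G0_nonneg (z : ℝ) : 0 ≤ G0 z := sq_nonneg _

lemma G0_eq_zero {z : ℝ} (hz : z ≤ 1) : G0 z = 0 := by
  rw [G0, max_eq_right (by linarith)]; norm_num

lemma lt_G0 {z : ℝ} (hz : 20 / 11 < z) : 81 / 121 < G0 z := by
  rw [G0, max_eq_left (by linarith)]; nlinarith

lemma Gi_nonneg {K N L : ℕ} (b : Fin L → Fin K → ℂ) {ρ : ℝ} (hρ : 0 ≤ ρ) (μ di : ℝ)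
    (hi : Fin K → ℂ) (xi : Fin N → ℂ) : 0 ≤ Gi b ρ μ di hi xi :=
  mul_nonneg hρ (add_nonneg (add_nonneg (G0_nonneg _) (G0_nonneg _))
    (Finset.sum_nonneg fun _ _ => G0_nonneg _))

lemma Greg_nonneg {K N L s : ℕ} (b : Fin L → Fin K → ℂ) {ρ : ℝ} (hρ : 0 ≤ ρ) (μ : ℝ)
    (dd : Fin s → ℝ) (h : Fin s → Fin K → ℂ) (x : Fin s → Fin N → ℂ) :
    0 ≤ Greg b ρ μ dd h x :=
  Finset.sum_nonneg fun _ _ => Gi_nonneg b hρ _ _ _ _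

/-- A small value of the regularizer forces `(h, x) ∈ 𝒩_d ∩ 𝒩_μ`. -/
lemma inNd_inNmu_of_Greg_le {K N L s : ℕ} (b : Fin L → Fin K → ℂ) {ρ μ : ℝ} (hρ : 0 < ρ)
    (hμ : 0 < μ) {d0 dd : Fin s → ℝ} (hd0 : ∀ i, 0 < d0 i)
    (hdd : ∀ i, 0.9 * d0 i ≤ dd i ∧ dd i ≤ 1.1 * d0 i)
    (h : Fin s → Fin K → ℂ) (x : Fin s → Fin N → ℂ)
    (hG : Greg b ρ μ dd h x ≤ ρ * (81 / 121)) :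
    inNd d0 h x ∧ inNmu b d0 μ h := by
  have hGi : ∀ i, G0 (vnormSq (h i) / (2 * dd i)) + G0 (vnormSq (x i) / (2 * dd i))
      + ∑ l, G0 ((L : ℝ) * ‖vinner (b l) (h i)‖ ^ 2 / (8 * dd i * μ ^ 2)) ≤ 81 / 121 := by
    intro i
    have h1 : Gi b ρ μ (dd i) (h i) (x i) ≤ Greg b ρ μ dd h x :=
      Finset.single_le_sum (f := fun i => Gi b ρ μ (dd i) (h i) (x i))
        (fun j _ => Gi_nonneg b hρ.le _ _ _ _) (Finset.mem_univ i)
    exact le_of_mul_le_mul_left (h1.trans hG) hρ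
  have hddpos : ∀ i, 0 < dd i := fun i => by have := (hdd i).1; have := hd0 i; linarith
  have hsum : ∀ i, 0 ≤ ∑ l, G0 ((L : ℝ) * ‖vinner (b l) (h i)‖ ^ 2 / (8 * dd i * μ ^ 2)) :=
    fun i => Finset.sum_nonneg fun _ _ => G0_nonneg _
  have hle : ∀ {z : ℝ}, G0 z ≤ 81 / 121 → z ≤ 20 / 11 := fun hz => by
    by_contra hc
    exact absurd (lt_G0 (not_le.1 hc)) (not_lt.2 hz)
  have hnorm : ∀ {n : ℕ} (w : Fin n → ℂ) (i : Fin s), vnormSq w / (2 * dd i) ≤ 20 / 11 →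
      vnorm w ≤ 2 * Real.sqrt (d0 i) := by
    intro n w i hw
    rw [div_le_iff₀ (by have := hddpos i; positivity)] at hw
    refine (abs_le_of_sq_le_sq' ?_ (by positivity)).2
    rw [vnorm_sq, mul_pow, Real.sq_sqrt (hd0 i).le]
    linarith [(hdd i).2]
  refine ⟨fun i => ⟨hnorm _ i (hle ?_), hnorm _ i (hle ?_)⟩, fun i l => ?_⟩
  · linarith [hGi i, hsum i, G0_nonneg (vnormSq (x i) / (2 * dd i))]
  · linarith [hGi i, hsum i, G0_nonneg (vnormSq (h i) / (2 * dd i))]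
  · have h1 : G0 ((L : ℝ) * ‖vinner (b l) (h i)‖ ^ 2 / (8 * dd i * μ ^ 2))
        ≤ ∑ l, G0 ((L : ℝ) * ‖vinner (b l) (h i)‖ ^ 2 / (8 * dd i * μ ^ 2)) :=
      Finset.single_le_sum
        (f := fun l => G0 ((L : ℝ) * ‖vinner (b l) (h i)‖ ^ 2 / (8 * dd i * μ ^ 2)))
        (fun _ _ => G0_nonneg _) (Finset.mem_univ l)
    have g1 := G0_nonneg (vnormSq (x i) / (2 * dd i))
    have g2 := G0_nonneg (vnormSq (h i) / (2 * dd i))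
    have h2 := hle (h1.trans (by linarith [hGi i]))
    have hp := hddpos i
    rw [div_le_iff₀ (by positivity)] at h2
    refine (abs_le_of_sq_le_sq' ?_ (by positivity)).2
    rw [mul_pow, mul_pow, mul_pow, Real.sq_sqrt (hd0 i).le, Real.sq_sqrt (Nat.cast_nonneg L)]
    have h3 := mul_le_mul_of_nonneg_right (hdd i).2 (sq_nonneg μ)
    linarith

lemma Greg_eq_zero {K N L s : ℕ} (b : Fin L → Fin K → ℂ) (ρ : ℝ) {μ : ℝ}
    (hμ : 0 < μ) {d0 dd : Fin s → ℝ} (hd0 : ∀ i, 0 < d0 i) (hdd : ∀ i, 0.9 * d0 i ≤ dd i)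
    (h : Fin s → Fin K → ℂ) (x : Fin s → Fin N → ℂ)
    (hh : ∀ i, vnorm (h i) ≤ 2 / Real.sqrt 3 * Real.sqrt (d0 i))
    (hx : ∀ i, vnorm (x i) ≤ 2 / Real.sqrt 3 * Real.sqrt (d0 i))
    (hhμ : ∀ i l, Real.sqrt L * ‖vinner (b l) (h i)‖ ≤ 4 / Real.sqrt 3 * Real.sqrt (d0 i) * μ) :
    Greg b ρ μ dd h x = 0 := by
  have h3 : Real.sqrt 3 ^ 2 = 3 := Real.sq_sqrt (by norm_num)
  have hnorm : ∀ {n : ℕ} (w : Fin n → ℂ) (i : Fin s),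
      vnorm w ≤ 2 / Real.sqrt 3 * Real.sqrt (d0 i) → vnormSq w / (2 * dd i) ≤ 1 := by
    intro n w i hw
    have := hd0 i
    have := hdd i
    have h4 := pow_le_pow_left₀ (vnorm_nonneg w) hw 2
    rw [vnorm_sq, mul_pow, div_pow, h3, Real.sq_sqrt (hd0 i).le] at h4
    rw [div_le_one (by linarith)]
    linarith
  refine Finset.sum_eq_zero fun i _ => ?_
  rw [Gi, G0_eq_zero (hnorm _ i (hh i)), G0_eq_zero (hnorm _ i (hx i)), Finset.sum_eq_zero]
  · ring
  · intro l _
    refine G0_eq_zero ?_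
    have hp : 0 < dd i := by have := hd0 i; have := hdd i; linarith
    have h4 := pow_le_pow_left₀ (by positivity) (hhμ i l) 2
    rw [mul_pow, mul_pow, mul_pow, div_pow, h3, Real.sq_sqrt (hd0 i).le,
      Real.sq_sqrt (Nat.cast_nonneg L)] at h4
    rw [div_le_one (by positivity)]
    have h5 := mul_le_mul_of_nonneg_right (hdd i) (sq_nonneg μ)
    nlinarith [mul_nonneg (hd0 i).le (sq_nonneg μ)]

lemma frob_le_famFrob {K N s : ℕ} (Z : Fin s → Matrix (Fin K) (Fin N) ℂ) (i : Fin s) :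
    frob (Z i) ≤ famFrob Z :=
  Real.sqrt_le_sqrt (Finset.single_le_sum (f := fun i => frobSq (Z i))
    (fun _ _ => frobSq_nonneg _) (Finset.mem_univ i))

lemma famFrob_le_of_deltaI_le {K N s : ℕ} {h0 : Fin s → Fin K → ℂ} {x0 : Fin s → Fin N → ℂ}
    {d0 : Fin s → ℝ} (hd0 : ∀ i, 0 < d0 i) {h : Fin s → Fin K → ℂ} {x : Fin s → Fin N → ℂ}
    {r : ℝ} (hr : 0 ≤ r) (hδ : ∀ i, deltaI (h0 i) (x0 i) (d0 i) (h i) (x i) ≤ r) :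
    famFrob (fun i => Hmap h x i - Hmap h0 x0 i) ≤ r * dtot d0 := by
  refine Real.sqrt_le_iff.2 ⟨mul_nonneg hr (Real.sqrt_nonneg _), ?_⟩
  rw [mul_pow, dtot, Real.sq_sqrt (Finset.sum_nonneg fun _ _ => sq_nonneg _), Finset.mul_sum]
  refine Finset.sum_le_sum fun i _ => ?_
  have h1 := hδ i
  rw [deltaI, div_le_iff₀ (hd0 i)] at h1
  have h2 := pow_le_pow_left₀ (Real.sqrt_nonneg _) h1 2
  rw [← frob, frob_sq, mul_pow] at h2
  exact h2

lemma le_Ftil {K N L s : ℕ} (b : Fin L → Fin K → ℂ) (a : Fin s → Fin L → Fin N → ℂ)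
    (h0 : Fin s → Fin K → ℂ) (x0 : Fin s → Fin N → ℂ) (d0 : Fin s → ℝ) (e : Fin L → ℂ)
    {ρ μ ε : ℝ} (dd : Fin s → ℝ) (hρ : 0 ≤ ρ) (hne : ∀ i, vnormSq (h0 i) ≠ 0)
    (hRIP : LocalRIP b a h0 x0 d0 μ ε) {h : Fin s → Fin K → ℂ} {x : Fin s → Fin N → ℂ}
    (hd : inNd d0 h x) (hm : inNmu b d0 μ h) (hN : inNeps h0 x0 d0 ε h x) :
    2 / 3 * famFrob (fun i => Hmap h x i - Hmap h0 x0 i) ^ 2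
      - 2 * (Real.sqrt 2 * (Real.sqrt s * AadjNorm b a e))
        * famFrob (fun i => Hmap h x i - Hmap h0 x0 i) + vnormSq e
      ≤ Ftil b a h0 x0 e ρ μ dd h x := by
  have h1 := (hRIP h x hd hm hN).1
  have h2 := (abs_le.1 (abs_re_vinner_calA_le b a h0 x0 e h x hne)).2
  have h3 := Greg_nonneg b hρ μ dd h x
  rw [Ftil, Fobj_eq, famFrob_sq]
  linarith

lemma Fobj_le {K N L s : ℕ} (b : Fin L → Fin K → ℂ) (a : Fin s → Fin L → Fin N → ℂ)
    (h0 : Fin s → Fin K → ℂ) (x0 : Fin s → Fin N → ℂ) (d0 : Fin s → ℝ) (e : Fin L → ℂ)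
    {μ ε : ℝ} (hne : ∀ i, vnormSq (h0 i) ≠ 0)
    (hRIP : LocalRIP b a h0 x0 d0 μ ε) {h : Fin s → Fin K → ℂ} {x : Fin s → Fin N → ℂ}
    (hd : inNd d0 h x) (hm : inNmu b d0 μ h) (hN : inNeps h0 x0 d0 ε h x) :
    Fobj b a h0 x0 e h x ≤ 3 / 2 * famFrob (fun i => Hmap h x i - Hmap h0 x0 i) ^ 2
      + 2 * (Real.sqrt 2 * (Real.sqrt s * AadjNorm b a e))
        * famFrob (fun i => Hmap h x i - Hmap h0 x0 i) + vnormSq e := by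
  have h1 := (hRIP h x hd hm hN).2
  have h2 := (abs_le.1 (abs_re_vinner_calA_le b a h0 x0 e h x hne)).1
  rw [Fobj_eq, famFrob_sq]
  linarith

lemma le_of_quadratic_le {D S A : ℝ} (hS : 0 ≤ S) (hA : 0 ≤ A)
    (h : 2 / 3 * D ^ 2 - 2 * (Real.sqrt 2 * A) * D - 2000 * A ^ 2 ≤ 2 / 3 * S ^ 2) :
    D ≤ S + 60 * A := by
  by_contra hc
  rw [not_le] at hc
  have h2 : Real.sqrt 2 ≤ 3 / 2 := Real.sqrt_le_iff.2 ⟨by norm_num, by norm_num⟩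
  have h3 := mul_le_mul_of_nonneg_right h2 hA
  have h4 := mul_nonneg (sub_nonneg.2 h3) (by linarith : (0 : ℝ) ≤ D)
  nlinarith [mul_nonneg hS hA, mul_nonneg hA hA, mul_pos (sub_pos.2 hc) (by linarith : 0 < D),
    mul_nonneg (sub_nonneg.2 hc.le) hA, mul_nonneg (sub_nonneg.2 hc.le) hS]

/-! ### Linear convergence -/

set_option maxHeartbeats 1600000 in
/-- linear convergence of regularized Wirtinger gradient descent. -/
theorem statement4
    {K N L s : ℕ} (hK : 0 < K) (hN : 0 < N) (hL : 0 < L) (hs : 0 < s)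
    (b : Fin L → Fin K → ℂ) (hb : BtBeqI b)
    (a : Fin s → Fin L → Fin N → ℂ)
    (h0 : Fin s → Fin K → ℂ) (x0 : Fin s → Fin N → ℂ)
    (d0 : Fin s → ℝ) (hd0 : ∀ i, 0 < d0 i)
    (hh0 : ∀ i, vnorm (h0 i) = Real.sqrt (d0 i))
    (hx0 : ∀ i, vnorm (x0 i) = Real.sqrt (d0 i))
    (e : Fin L → ℂ) (μ ρ d ε : ℝ) (dd : Fin s → ℝ)
    (hμ : 0 < μ) (hε : 0 < ε) (hε15 : ε ≤ 1 / 15)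
    (hdd : ∀ i, 0.9 * d0 i ≤ dd i ∧ dd i ≤ 1.1 * d0 i)
    (hdlow : 0.9 * dtot d0 ≤ d) (hdhigh : d ≤ 1.1 * dtot d0)
    (hρ : d ^ 2 + 2 * vnormSq e ≤ ρ)
    (hRIP : LocalRIP b a h0 x0 d0 μ ε)
    (hAe : AadjNorm b a e ≤ ε * dtot d0 / (10 * Real.sqrt 2 * (s : ℝ) * kappa d0))
    (hreg : ∀ (h : Fin s → Fin K → ℂ) (x : Fin s → Fin N → ℂ),
      inNd d0 h x → inNmu b d0 μ h → inNeps h0 x0 d0 ε h x →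
        gradNormSq b a h0 x0 e ρ μ dd h x
          ≥ dtot d0 / 7000 *
            max (Ftil b a h0 x0 e ρ μ dd h x
              - (vnormSq e + 2000 * (s : ℝ) * AadjNorm b a e ^ 2)) 0)
    (CL η : ℝ) (hCL : 0 < CL) (hη0 : 0 < η) (hηCL : η ≤ 1 / CL)
    (hηω : η * (dtot d0 / 7000) ≤ 1)
    (hLip : ∀ (h : Fin s → Fin K → ℂ) (x : Fin s → Fin N → ℂ)
        (wh : Fin s → Fin K → ℂ) (wx : Fin s → Fin N → ℂ),
      (∀ τ : ℝ, τ ∈ Set.Icc (0 : ℝ) 1 →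
        inNeps h0 x0 d0 ε (shiftV h wh τ) (shiftV x wx τ) ∧
        inNF b a h0 x0 e d0 ρ μ dd ε (shiftV h wh τ) (shiftV x wx τ)) →
      ∀ t : ℝ, t ∈ Set.Icc (0 : ℝ) 1 →
        Real.sqrt (gradDiffNormSq b a h0 x0 e ρ μ dd h x (shiftV h wh t) (shiftV x wx t))
          ≤ CL * t * pairNorm wh wx)
    (u : ℕ → Fin s → Fin K → ℂ) (v : ℕ → Fin s → Fin N → ℂ)
    (hu0d : ∀ i, vnorm (u 0 i) ≤ 2 / Real.sqrt 3 * Real.sqrt (d0 i))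
    (hv0d : ∀ i, vnorm (v 0 i) ≤ 2 / Real.sqrt 3 * Real.sqrt (d0 i))
    (hu0μ : ∀ i l, Real.sqrt L * ‖vinner (b l) (u 0 i)‖
        ≤ 4 / Real.sqrt 3 * Real.sqrt (d0 i) * μ)
    (hinit : ∀ i, deltaI (h0 i) (x0 i) (d0 i) (u 0 i) (v 0 i)
        ≤ 2 * ε / (5 * Real.sqrt s * kappa d0))
    (hrecu : ∀ t i k, u (t + 1) i k
        = u t i k - (η : ℂ) * gradH b a h0 x0 e ρ μ dd (u t) (v t) i k)
    (hrecv : ∀ t i j, v (t + 1) i j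
        = v t i j - (η : ℂ) * gradX b a h0 x0 e ρ μ dd (u t) (v t) i j) :
    ∀ t : ℕ,
      famFrob (fun i => Hmap (u t) (v t) i - Hmap h0 x0 i)
        ≤ ε * dtot d0 / Real.sqrt (2 * (s : ℝ) * kappa d0 ^ 2)
            * (1 - η * (dtot d0 / 7000)) ^ ((t : ℝ) / 2)
          + 60 * Real.sqrt s * AadjNorm b a e := by
  have hκ1 := one_le_kappa hs hd0
  have hD0 := dtot_pos hs hd0
  have hs1 : (1 : ℝ) ≤ s := by exact_mod_cast hs
  have hss1 : 1 ≤ Real.sqrt s := Real.one_le_sqrt.2 hs1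
  have hssq : Real.sqrt s ^ 2 = s := Real.sq_sqrt (by linarith)
  have h22 : Real.sqrt 2 ^ 2 = 2 := Real.sq_sqrt (by norm_num)
  have hs2pos : 0 < Real.sqrt 2 := Real.sqrt_pos.2 (by norm_num)
  have hα := AadjNorm_nonneg b a e
  set α := AadjNorm b a e with hαdef
  have hene := vnormSq_nonneg e
  have hsκ : 1 ≤ Real.sqrt s * kappa d0 := one_le_mul_of_one_le_of_one_le hss1 hκ1
  have hsκ0 : 0 < Real.sqrt s * kappa d0 := by linarith
  set Q := ε * dtot d0 / (Real.sqrt s * kappa d0) with hQdef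
  have hQ : 0 < Q := by positivity
  have hQsq : ε ^ 2 * dtot d0 ^ 2 / (3 * (s : ℝ) * kappa d0 ^ 2) = Q ^ 2 / 3 := by
    rw [hQdef, div_pow, mul_pow, mul_pow, hssq, div_div]
    congr 1
    ring
  have hQle : Q ≤ ε * dtot d0 := div_le_self (by positivity) hsκ
  have hQi : ∀ i, Q ≤ ε * d0 i := by
    intro i
    rw [hQdef, div_le_iff₀ hsκ0]
    have := mul_le_mul_of_nonneg_left (dtot_le hs hd0 i) hε.le
    linarith
  have hne : ∀ i, vnormSq (h0 i) ≠ 0 := by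
    intro i
    rw [← vnorm_sq, hh0, Real.sq_sqrt (hd0 i).le]
    exact (hd0 i).ne'
  have hρ0 : 0.81 * dtot d0 ^ 2 + 2 * vnormSq e ≤ ρ := by nlinarith
  have hρpos : 0 < ρ := by nlinarith [pow_pos hD0 2]
  have hαQ : Real.sqrt 2 * (Real.sqrt s * α) ≤ Q / 10 := by
    have h1 := mul_le_mul_of_nonneg_left hAe (mul_nonneg hs2pos.le (Real.sqrt_nonneg (s : ℝ)))
    have h2 : Real.sqrt 2 * Real.sqrt s * (ε * dtot d0 / (10 * Real.sqrt 2 * (s : ℝ) * kappa d0))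
        = Q / 10 := by
      rw [hQdef]
      nth_rewrite 2 [← hssq]
      have : kappa d0 ≠ 0 := by linarith
      have : Real.sqrt s ≠ 0 := by linarith
      field_simp
    linarith
  have hbasin : ∀ (h : Fin s → Fin K → ℂ) (x : Fin s → Fin N → ℂ),
      inNF b a h0 x0 e d0 ρ μ dd ε h x → inNd d0 h x ∧ inNmu b d0 μ h := by
    intro h x hF
    refine inNd_inNmu_of_Greg_le b hρpos hμ hd0 hdd h x ?_
    have hFn : 0 ≤ Fobj b a h0 x0 e h x := vnormSq_nonneg _
    have hQ2 : Q ^ 2 ≤ dtot d0 ^ 2 :=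
      pow_le_pow_left₀ hQ.le (hQle.trans (mul_le_of_le_one_left hD0.le (by linarith))) 2
    rw [inNF, hQsq, Ftil] at hF
    nlinarith
  have hlow := fun (h : Fin s → Fin K → ℂ) (x : Fin s → Fin N → ℂ)
      (hN : inNeps h0 x0 d0 ε h x) (hF : inNF b a h0 x0 e d0 ρ μ dd ε h x) =>
    le_Ftil b a h0 x0 d0 e dd hρpos.le hne hRIP (hbasin h x hF).1 (hbasin h x hF).2 hN
  have hshrink : ∀ (h : Fin s → Fin K → ℂ) (x : Fin s → Fin N → ℂ),
      inNeps h0 x0 d0 ε h x → inNF b a h0 x0 e d0 ρ μ dd ε h x →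
      ∀ i, deltaI (h0 i) (x0 i) (d0 i) (h i) (x i) < ε := by
    intro h x hN hF i
    have h1 := hlow h x hN hF
    rw [inNF, hQsq] at hF
    set D := famFrob (fun i => Hmap h x i - Hmap h0 x0 i) with hD
    have hDnn : 0 ≤ D := Real.sqrt_nonneg _
    have hDQ : D < Q := by
      by_contra hc
      rw [not_lt] at hc
      have h2 := mul_le_mul_of_nonneg_right hαQ hDnn
      nlinarith
    rw [deltaI, div_lt_iff₀ (hd0 i)]
    exact ((frob_le_famFrob (fun i => Hmap h x i - Hmap h0 x0 i) i).trans_lt hDQ).trans_le (hQi i)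
  set r := 1 - η * (dtot d0 / 7000) with hr
  have hr0 : 0 ≤ r := by linarith
  have hinv : ∀ t : ℕ, inNeps h0 x0 d0 ε (u t) (v t) ∧
      inNF b a h0 x0 e d0 ρ μ dd ε (u t) (v t) ∧
      max (Ftil b a h0 x0 e ρ μ dd (u t) (v t) - (vnormSq e + 2000 * (s : ℝ) * α ^ 2)) 0
        ≤ r ^ t * (Q ^ 2 / 3) := by
    intro t
    induction t with
    | zero =>
      have hδ : ∀ i, deltaI (h0 i) (x0 i) (d0 i) (u 0 i) (v 0 i)
          ≤ 2 / 5 * (ε / (Real.sqrt s * kappa d0)) := fun i =>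
        (hinit i).trans_eq (by rw [mul_assoc, mul_div_mul_comm])
      have hN : inNeps h0 x0 d0 ε (u 0) (v 0) := fun i => by
        have h1 : ε / (Real.sqrt s * kappa d0) ≤ ε := div_le_self hε.le hsκ
        linarith [hδ i]
      have h3 : 1 ≤ Real.sqrt 3 := Real.one_le_sqrt.2 (by norm_num)
      have hd : inNd d0 (u 0) (v 0) := fun i => by
        have h2 := mul_le_mul_of_nonneg_right (div_le_self (zero_le_two (α := ℝ)) h3)
          (Real.sqrt_nonneg (d0 i))
        exact ⟨(hu0d i).trans h2, (hv0d i).trans h2⟩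
      have hm : inNmu b d0 μ (u 0) := fun i l => by
        have h2 := mul_le_mul_of_nonneg_right (div_le_self (zero_le_four (α := ℝ)) h3)
          (mul_nonneg (Real.sqrt_nonneg (d0 i)) hμ.le)
        linarith [hu0μ i l]
      have hG := Greg_eq_zero b ρ hμ hd0 (fun i => (hdd i).1) (u 0) (v 0) hu0d hv0d hu0μ
      have hF := Fobj_le b a h0 x0 d0 e hne hRIP hd hm hN
      have hDle := famFrob_le_of_deltaI_le hd0 (by positivity) hδ
      have hDQ : 2 / 5 * (ε / (Real.sqrt s * kappa d0)) * dtot d0 = 2 / 5 * Q := by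
        rw [hQdef]; ring
      rw [hDQ] at hDle
      rw [← hαdef] at hF
      set D := famFrob (fun i => Hmap (u 0) (v 0) i - Hmap h0 x0 i) with hD
      have hDnn : 0 ≤ D := Real.sqrt_nonneg _
      have hFt : Ftil b a h0 x0 e ρ μ dd (u 0) (v 0) ≤ Q ^ 2 / 3 + vnormSq e := by
        rw [Ftil, hG]
        have h4 := mul_le_mul hαQ hDle hDnn (by linarith)
        have h5 := pow_le_pow_left₀ hDnn hDle 2
        nlinarith
      refine ⟨hN, by rw [inNF, hQsq]; exact hFt, ?_⟩
      have : 0 ≤ 2000 * (s : ℝ) * α ^ 2 := by positivity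
      rw [pow_zero, one_mul]
      exact max_le (by linarith) (by positivity)
    | succ t ih =>
      obtain ⟨hN, hF, hP⟩ := ih
      obtain ⟨hd, hm⟩ := hbasin _ _ hF
      have hrg := hreg _ _ hd hm hN
      obtain ⟨hN', hdec⟩ := gradient_step b a h0 x0 d0 e μ ρ ε dd hshrink CL η hCL hη0 hηCL hLip
        (u t) (u (t + 1)) (v t) (v (t + 1)) (hrecu t) (hrecv t) hN hF
      have hmul := mul_le_mul_of_nonneg_left hrg hη0.le
      set P := max (Ftil b a h0 x0 e ρ μ dd (u t) (v t)
        - (vnormSq e + 2000 * (s : ℝ) * α ^ 2)) 0 with hPdef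
      have hP0 : 0 ≤ P := le_max_right _ _
      have hP1 : Ftil b a h0 x0 e ρ μ dd (u t) (v t)
        - (vnormSq e + 2000 * (s : ℝ) * α ^ 2) ≤ P := le_max_left _ _
      have hprod : 0 ≤ η * (dtot d0 / 7000 * P) := by positivity
      refine ⟨hN', ?_, ?_⟩
      · rw [inNF] at hF ⊢
        linarith
      · have hrP : r * P ≤ r ^ (t + 1) * (Q ^ 2 / 3) := by
          have := mul_le_mul_of_nonneg_left hP hr0
          rw [pow_succ']
          linarith
        refine max_le (le_trans ?_ hrP) ((mul_nonneg hr0 hP0).trans hrP)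
        rw [hr]
        linarith
  intro t
  obtain ⟨hN, hF, hP⟩ := hinv t
  have h1 := hlow _ _ hN hF
  rw [← hαdef] at h1
  have h2 := (le_max_left _ _).trans hP
  have hR : (r ^ ((t : ℝ) / 2)) ^ 2 = r ^ t := by
    rw [← Real.rpow_natCast (r ^ ((t : ℝ) / 2)) 2, ← Real.rpow_mul hr0]
    simp
  have hcoef : ε * dtot d0 / Real.sqrt (2 * (s : ℝ) * kappa d0 ^ 2) = Q / Real.sqrt 2 := by
    rw [Real.sqrt_mul (by positivity), Real.sqrt_mul zero_le_two, Real.sqrt_sq (by linarith),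
      hQdef, div_div]
    congr 1
    ring
  have hS : (Q / Real.sqrt 2 * r ^ ((t : ℝ) / 2)) ^ 2 = Q ^ 2 / 2 * r ^ t := by
    rw [mul_pow, div_pow, h22, hR]
  have hA2 : (Real.sqrt s * α) ^ 2 = s * α ^ 2 := by rw [mul_pow, hssq]
  rw [hcoef, mul_assoc 60]
  refine le_of_quadratic_le (by positivity) (by positivity) ?_
  rw [hS, hA2]
  linarith

end RGD
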